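/- arXiv:1605.06985 — 6 statements merged into one kernel-verified Lean document; each statement's English description precedes it below -/
import Mathlib

section
/- Let D > 0, let F : [0, D) → ℝ be C¹ with F' ≥ 0 on [0,D), and let r : ℂ² → ℝ be convex and Fréchet-differentiable. Define ρ(z) = F(|z₁|²) + r(z) for z = (z₁,z₂) with |z₁|² < D. Then for all ζ, z ∈ ℂ² with |ζ₁|² < D and |z₁|² < D: 2 Re Φ(ζ,z) ≥ ρ(ζ) − ρ(z) + F'(|ζ₁|²)·|z₁ − ζ₁|² + [ F(|z₁|²) − F(|ζ₁|²) − F'(|ζ₁|²)·(|z₁|² − |ζ₁|²) ]. -/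
open Complex Set

/-- The Wirtinger derivative `∂g/∂z₁` of a real-valued function `g` on `ℂ²`. -/
noncomputable def wirt1 (g : ℂ × ℂ → ℝ) (ζ : ℂ × ℂ) : ℂ :=
  (1 / 2 : ℂ) * (((fderiv ℝ g ζ) (1, 0) : ℝ) - Complex.I * ((fderiv ℝ g ζ) (Complex.I, 0) : ℝ))

/-- The Wirtinger derivative `∂g/∂z₂`. -/
noncomputable def wirt2 (g : ℂ × ℂ → ℝ) (ζ : ℂ × ℂ) : ℂ :=
  (1 / 2 : ℂ) * (((fderiv ℝ g ζ) (0, 1) : ℝ) - Complex.I * ((fderiv ℝ g ζ) (0, Complex.I) : ℝ))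

/-- The support function `Φ(ζ,z) = Σ_{j=1}^{2} (∂g/∂ζ_j)(ζ)·(ζ_j − z_j)`. -/
noncomputable def suppFn (g : ℂ × ℂ → ℝ) (ζ z : ℂ × ℂ) : ℂ :=
  wirt1 g ζ * (ζ.1 - z.1) + wirt2 g ζ * (ζ.2 - z.2)

/-!
For any real-differentiable `g`, `2 Re Φ_g(ζ, z)` is the real differential of `g` at `ζ` applied to
`ζ - z`, so it is additive in `g`. On `r` it dominates `r ζ - r z` because a convex function lies
above its tangents. On `F(|z₁|²)` the chain rule gives `2 F'(|ζ₁|²) ⟪ζ₁, ζ₁ - z₁⟫`, which by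
polarization is `F'(|ζ₁|²) (|ζ₁|² - |z₁|² + |z₁ - ζ₁|²)`. The increments of `F` in the claimed bound
cancel.
-/

section

variable {E G : Type*} [NormedAddCommGroup G] [NormedSpace ℝ G]

theorem add_apply_sub_le_of_convexOn_of_hasFDerivWithinAt {s : Set G} {f : G → ℝ}
    {f' : G →L[ℝ] ℝ} {x y : G} (hf : ConvexOn ℝ s f) (hx : x ∈ s) (hy : y ∈ s)
    (hf' : HasFDerivWithinAt f f' s x) : f x + f' (y - x) ≤ f y := by
  let ℓ : ℝ →ᵃ[ℝ] G := AffineMap.lineMap x y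
  have hℓ₀ : ℓ 0 = x := AffineMap.lineMap_apply_zero x y
  have hℓ₁ : ℓ 1 = y := AffineMap.lineMap_apply_one x y
  have hconv : ConvexOn ℝ (ℓ ⁻¹' s) (f ∘ ℓ) := hf.comp_affineMap ℓ
  have hderiv : HasDerivWithinAt (f ∘ ℓ) (f' (y - x)) (ℓ ⁻¹' s) 0 :=
    hf'.comp_hasDerivWithinAt_of_eq 0 AffineMap.hasDerivWithinAt_lineMap (mapsTo_preimage ℓ s)
      hℓ₀.symm
  have hslope : f' (y - x) ≤ slope (f ∘ ℓ) 0 1 :=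
    hconv.le_slope_of_hasDerivWithinAt (by rwa [mem_preimage, hℓ₀]) (by rwa [mem_preimage, hℓ₁])
      one_pos hderiv
  rw [slope_def_field, Function.comp_apply, Function.comp_apply, hℓ₀, hℓ₁, sub_zero, div_one]
    at hslope
  linarith

variable [NormedAddCommGroup E] [InnerProductSpace ℝ E]

theorem hasFDerivAt_comp_norm_sq {F : ℝ → ℝ} {F' : ℝ} {g : G → E} {g' : G →L[ℝ] E} {x : G}
    (hF : HasDerivWithinAt F F' (Ici 0) (‖g x‖ ^ 2)) (hg : HasFDerivAt g g' x) :
    HasFDerivAt (fun y ↦ F (‖g y‖ ^ 2)) (F' • 2 • (innerSL ℝ (g x)).comp g') x :=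
  hF.comp_hasFDerivAt x hg.norm_sq (.of_forall fun y ↦ sq_nonneg ‖g y‖)

theorem two_mul_real_inner_sub_right_self (x y : E) :
    2 * inner ℝ x (x - y) = ‖x‖ ^ 2 - ‖y‖ ^ 2 + ‖y - x‖ ^ 2 := by
  rw [inner_sub_right, real_inner_self_eq_norm_sq, norm_sub_sq_real, real_inner_comm]
  ring

end

theorem two_mul_re_half_sub_I_mul_mul (L : ℂ →ₗ[ℝ] ℝ) (w : ℂ) :
    2 * ((1 / 2 : ℂ) * ((L 1 : ℝ) - I * (L I : ℝ)) * w).re = L w := by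
  have hL : L w = w.re * L 1 + w.im * L I := by
    have hw : w = w.re • (1 : ℂ) + w.im • I := by simp
    conv_lhs => rw [hw, map_add, map_smul, map_smul, smul_eq_mul, smul_eq_mul]
  have half_cast : (1 / 2 : ℂ) = ((1 / 2 : ℝ) : ℂ) := by norm_num
  rw [hL, half_cast, mul_assoc, re_ofReal_mul]
  simp only [mul_re, sub_re, mul_im, sub_im, I_re, I_im, ofReal_re, ofReal_im]
  ring

theorem two_mul_re_wirt1_mul (g : ℂ × ℂ → ℝ) (ζ : ℂ × ℂ) (w : ℂ) :
    2 * (wirt1 g ζ * w).re = fderiv ℝ g ζ (w, 0) := by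
  simpa only [wirt1, LinearMap.comp_apply, LinearMap.inl_apply, ContinuousLinearMap.coe_coe] using
    two_mul_re_half_sub_I_mul_mul (fderiv ℝ g ζ ∘ₗ LinearMap.inl ℝ ℂ ℂ) w

theorem two_mul_re_wirt2_mul (g : ℂ × ℂ → ℝ) (ζ : ℂ × ℂ) (w : ℂ) :
    2 * (wirt2 g ζ * w).re = fderiv ℝ g ζ (0, w) := by
  simpa only [wirt2, LinearMap.comp_apply, LinearMap.inr_apply, ContinuousLinearMap.coe_coe] using
    two_mul_re_half_sub_I_mul_mul (fderiv ℝ g ζ ∘ₗ LinearMap.inr ℝ ℂ ℂ) w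

theorem two_mul_re_suppFn (g : ℂ × ℂ → ℝ) (ζ z : ℂ × ℂ) :
    2 * (suppFn g ζ z).re = fderiv ℝ g ζ (ζ - z) := by
  rw [suppFn, add_re, mul_add, two_mul_re_wirt1_mul, two_mul_re_wirt2_mul, ← map_add,
    Prod.mk_add_mk, add_zero, zero_add]
  rfl

theorem stmt1_general {F : ℝ → ℝ} {F' : ℝ} {s : Set (ℂ × ℂ)} {r ρ : ℂ × ℂ → ℝ} {ζ z : ℂ × ℂ}
    (hF : HasDerivWithinAt F F' (Ici 0) (‖ζ.1‖ ^ 2)) (hconv : ConvexOn ℝ s r)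
    (hdiff : DifferentiableAt ℝ r ζ) (hρ : ∀ w, ρ w = F (‖w.1‖ ^ 2) + r w)
    (hζ : ζ ∈ s) (hz : z ∈ s) :
    ρ ζ - ρ z + F' * ‖z.1 - ζ.1‖ ^ 2 +
        (F (‖z.1‖ ^ 2) - F (‖ζ.1‖ ^ 2) - F' * (‖z.1‖ ^ 2 - ‖ζ.1‖ ^ 2)) ≤
      2 * (suppFn ρ ζ z).re := by
  have hderiv : HasFDerivAt ρ
      (F' • 2 • (innerSL ℝ ζ.1).comp (.fst ℝ ℂ ℂ) + fderiv ℝ r ζ) ζ := by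
    rw [funext hρ]
    exact (hasFDerivAt_comp_norm_sq hF hasFDerivAt_fst).add hdiff.hasFDerivAt
  have htangent : r ζ - r z ≤ fderiv ℝ r ζ (ζ - z) := by
    have h := add_apply_sub_le_of_convexOn_of_hasFDerivWithinAt hconv hζ hz
      hdiff.hasFDerivAt.hasFDerivWithinAt
    rw [← neg_sub ζ z, map_neg] at h
    linarith
  calc
    _ = F' * (‖ζ.1‖ ^ 2 - ‖z.1‖ ^ 2 + ‖z.1 - ζ.1‖ ^ 2) + (r ζ - r z) := by rw [hρ, hρ]; ring
    _ ≤ F' * (2 * inner ℝ ζ.1 (ζ.1 - z.1)) + fderiv ℝ r ζ (ζ - z) := by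
      rw [two_mul_real_inner_sub_right_self]
      exact add_le_add_right htangent _
    _ = fderiv ℝ ρ ζ (ζ - z) := by
      rw [hderiv.fderiv]
      simp [-Complex.inner]
    _ = 2 * (suppFn ρ ζ z).re := (two_mul_re_suppFn ρ ζ z).symm

/-- for `F` C¹ on `[0,D)` with `F' ≥ 0`, `r` convex differentiable, and
`ρ(z) = F(|z₁|²) + r(z)`, the support function `Φ` of `ρ` satisfies
`2 Re Φ(ζ,z) ≥ ρ(ζ) − ρ(z) + F'(|ζ₁|²)|z₁−ζ₁|² + [F(|z₁|²) − F(|ζ₁|²) − F'(|ζ₁|²)(|z₁|²−|ζ₁|²)]`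
whenever `|ζ₁|² < D` and `|z₁|² < D`. -/
theorem stmt1 (D : ℝ) (hD : 0 < D) (F : ℝ → ℝ)
    (hF : ContDiffOn ℝ 1 F (Set.Ico 0 D))
    (F' : ℝ → ℝ) (hF' : ∀ t ∈ Set.Ico 0 D, HasDerivWithinAt F (F' t) (Set.Ico 0 D) t)
    (hF'nonneg : ∀ t ∈ Set.Ico 0 D, 0 ≤ F' t)
    (r : ℂ × ℂ → ℝ) (hconv : ConvexOn ℝ Set.univ r) (hdiff : Differentiable ℝ r)
    (ρ : ℂ × ℂ → ℝ) (hρ : ∀ z : ℂ × ℂ, ρ z = F (‖z.1‖ ^ 2) + r z)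
    (ζ z : ℂ × ℂ) (hζ : ‖ζ.1‖ ^ 2 < D) (hz : ‖z.1‖ ^ 2 < D) :
    2 * (suppFn ρ ζ z).re ≥
      ρ ζ - ρ z + F' (‖ζ.1‖ ^ 2) * ‖z.1 - ζ.1‖ ^ 2 +
        (F (‖z.1‖ ^ 2) - F (‖ζ.1‖ ^ 2) -
          F' (‖ζ.1‖ ^ 2) * (‖z.1‖ ^ 2 - ‖ζ.1‖ ^ 2)) := by
  have hF_Ici : HasDerivWithinAt F (F' (‖ζ.1‖ ^ 2)) (Ici 0) (‖ζ.1‖ ^ 2) :=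
    (hasDerivWithinAt_inter (Iio_mem_nhds hζ)).1 (hF' _ ⟨sq_nonneg _, hζ⟩)
  exact stmt1_general hF_Ici hconv (hdiff ζ) hρ (mem_univ ζ) (mem_univ z)
end

section
/- Let d > 0 and let F : [0, d] → ℝ be C² with F(0) = 0, F'(0) = 0, and F'' nondecreasing on [0, d]. Then for all 0 ≤ b ≤ a ≤ d: F(a) − F(b) − F'(b)·(a − b) ≥ F(a − b). -/
open Set

/-!
Translating `F` by `c ≥ 0` and subtracting gives `G z = F (z + c) - F z`, whose derivative
`F' (z + c) - F' z` is nondecreasing because `F'` is convex. So `G` is convex and lies above its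
tangent at every point; in terms of `F`, this says that the remainder of `F` after its first-order
Taylor expansion does not decrease when base point and endpoint are both moved to the right by `c`.
The theorem is the case where the base point moves from `0` to `b`.
-/

theorem monotoneOn_comp_add_right_sub_of_convexOn {𝕜 : Type*} [Field 𝕜] [LinearOrder 𝕜]
    [IsStrictOrderedRing 𝕜] {s : Set 𝕜} {f : 𝕜 → 𝕜} (hf : ConvexOn 𝕜 s f) {c : 𝕜} (hc : 0 ≤ c) :
    MonotoneOn (fun x ↦ f (x + c) - f x) (s ∩ (· + c) ⁻¹' s) := by
  rintro x ⟨hx, hxc⟩ y ⟨hy, hyc⟩ hxy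
  rcases hc.eq_or_lt with rfl | hc
  · simp
  have slope_le_secant : (f (x + c) - f x) / c ≤ (f (y + c) - f x) / (y + c - x) := by
    simpa using hf.secant_mono hx hxc hyc (by linarith) (by linarith) (by linarith)
  have secant_le_slope : (f (y + c) - f x) / (y + c - x) ≤ (f (y + c) - f y) / c := by
    have := hf.secant_mono hyc hx hy (by linarith) (by linarith) hxy
    rwa [← neg_div_neg_eq, neg_sub, neg_sub, ← neg_div_neg_eq (f y - _), neg_sub, neg_sub,
      add_sub_cancel_left] at this
  exact (div_le_div_iff_of_pos_right hc).1 (slope_le_secant.trans secant_le_slope)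

theorem hasDerivWithinAt_comp_add_right_sub {𝕜 E : Type*} [NontriviallyNormedField 𝕜]
    [NormedAddCommGroup E] [NormedSpace 𝕜 E] {s : Set 𝕜} {f : 𝕜 → E} {c x : 𝕜} {m n : E}
    (hm : HasDerivWithinAt f m s x) (hn : HasDerivWithinAt f n s (x + c)) :
    HasDerivWithinAt (fun z ↦ f (z + c) - f z) (n - m) (s ∩ (· + c) ⁻¹' s) x := by
  have shifted : HasDerivWithinAt (fun z ↦ f (z + c)) n (s ∩ (· + c) ⁻¹' s) x := by
    simpa [Function.comp_def] using HasDerivWithinAt.scomp (h := (· + c)) x hn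
      ((hasDerivWithinAt_id x _).add_const c) fun z hz ↦ hz.2
  exact shifted.sub (hm.mono inter_subset_left)

section Real

variable {s : Set ℝ} {f f' : ℝ → ℝ}

theorem convexOn_of_hasDerivWithinAt_of_monotoneOn (hs : Convex ℝ s)
    (hf : ∀ x ∈ s, HasDerivWithinAt f (f' x) s x) (hf' : MonotoneOn f' s) : ConvexOn ℝ s f := by
  have hasDerivAt_interior : ∀ x ∈ interior s, HasDerivAt f (f' x) x := fun x hx ↦
    (hf x (interior_subset hx)).hasDerivAt (mem_interior_iff_mem_nhds.1 hx)
  refine MonotoneOn.convexOn_of_deriv hs (fun x hx ↦ (hf x hx).continuousWithinAt)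
    (fun x hx ↦ (hasDerivAt_interior x hx).differentiableAt.differentiableWithinAt) ?_
  exact (hf'.mono interior_subset).congr fun x hx ↦ (hasDerivAt_interior x hx).deriv.symm

theorem mul_sub_le_sub_of_convexOn_of_hasDerivWithinAt {m x y : ℝ} (hf : ConvexOn ℝ s f)
    (hx : x ∈ s) (hy : y ∈ s) (hm : HasDerivWithinAt f m s x) : m * (y - x) ≤ f y - f x := by
  rcases lt_trichotomy x y with hxy | rfl | hyx
  · have := hf.le_slope_of_hasDerivWithinAt hx hy hxy hm
    rwa [slope_def_field, le_div_iff₀ (sub_pos.2 hxy)] at this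
  · simp
  · have := hf.slope_le_of_hasDerivWithinAt hy hx hyx hm
    rw [slope_def_field, div_le_iff₀ (sub_pos.2 hyx)] at this
    linarith

theorem convexOn_comp_add_right_sub (hf : ∀ x ∈ s, HasDerivWithinAt f (f' x) s x)
    (hf' : ConvexOn ℝ s f') {c : ℝ} (hc : 0 ≤ c) :
    ConvexOn ℝ (s ∩ (· + c) ⁻¹' s) fun z ↦ f (z + c) - f z :=
  convexOn_of_hasDerivWithinAt_of_monotoneOn (hf'.1.inter (hf'.1.translate_preimage_left c))
    (fun x hx ↦ hasDerivWithinAt_comp_add_right_sub (hf x hx.1) (hf (x + c) hx.2))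
    (monotoneOn_comp_add_right_sub_of_convexOn hf' hc)

theorem stmt2_general (hf : ∀ x ∈ s, HasDerivWithinAt f (f' x) s x) (hf' : ConvexOn ℝ s f')
    {x y c : ℝ} (hc : 0 ≤ c) (hx : x ∈ s) (hy : y ∈ s) (hxc : x + c ∈ s) (hyc : y + c ∈ s) :
    f y - f x - f' x * (y - x) ≤ f (y + c) - f (x + c) - f' (x + c) * (y - x) := by
  have tangent_le : (f' (x + c) - f' x) * (y - x) ≤ f (y + c) - f y - (f (x + c) - f x) :=
    mul_sub_le_sub_of_convexOn_of_hasDerivWithinAt (convexOn_comp_add_right_sub hf hf' hc)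
      ⟨hx, hxc⟩ ⟨hy, hyc⟩ (hasDerivWithinAt_comp_add_right_sub (hf x hx) (hf (x + c) hxc))
  linarith

end Real

/-- if `F` is C² on `[0,d]` with `F(0) = 0`, `F'(0) = 0` and `F''` nondecreasing
on `[0,d]`, then `F(a) − F(b) − F'(b)(a−b) ≥ F(a−b)` for all `0 ≤ b ≤ a ≤ d`. -/
theorem stmt2 (d : ℝ) (hd : 0 < d) (F F' F'' : ℝ → ℝ)
    (hF : ContDiffOn ℝ 2 F (Set.Icc 0 d))
    (hF' : ∀ t ∈ Set.Icc 0 d, HasDerivWithinAt F (F' t) (Set.Icc 0 d) t)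
    (hF'' : ∀ t ∈ Set.Icc 0 d, HasDerivWithinAt F' (F'' t) (Set.Icc 0 d) t)
    (hF0 : F 0 = 0) (hF'0 : F' 0 = 0)
    (hmono : MonotoneOn F'' (Set.Icc 0 d)) :
    ∀ a b : ℝ, 0 ≤ b → b ≤ a → a ≤ d →
      F a - F b - F' b * (a - b) ≥ F (a - b) := by
  intro a b hb hba had
  have hconv := convexOn_of_hasDerivWithinAt_of_monotoneOn (convex_Icc 0 d) hF'' hmono
  simpa [hF0, hF'0] using stmt2_general (x := 0) (y := a - b) hF' hconv hb
    (by grind) (by grind) (by grind) (by grind)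
end

section
/- Let d > 0 and let F : [0, d] → ℝ be C² with F(0) = 0, F'(0) = 0, F' ≥ 0 on [0,d], and F'' nondecreasing on [0, d]. Then for all 0 ≤ b ≤ a/2 with a ≤ d: F(a) − F(b) − F'(b)·(a − b) ≥ F(a/2). In particular, if ζ₁, z₁ ∈ ℂ satisfy |ζ₁| ≤ (1/√2)|z₁| and |z₁|² ≤ d, then F(|z₁|²) − F(|ζ₁|²) − F'(|ζ₁|²)·(|z₁|² − |ζ₁|²) ≥ F(|z₁|²/2). -/
open Set

/-!
Since `F''` is nondecreasing, `F'` is convex, and a convex function vanishing at `0` is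
superadditive on `[0, d]`: `F' b + F' t ≤ F' (b + t)`. Integrating this over `t ∈ [0, a - b]` gives
`F (a - b) - F 0 ≤ F a - F b - F' b * (a - b)`. As `F` is nondecreasing and `a / 2 ≤ a - b`, the
left-hand side is at least `F (a / 2) - F 0`.
-/

lemma convexOn_of_hasDerivAt_of_monotoneOn {s : Set ℝ} (hs : Convex ℝ s) {f f' : ℝ → ℝ}
    (hf : ContinuousOn f s) (hf' : ∀ x ∈ interior s, HasDerivAt f (f' x) x)
    (hmono : MonotoneOn f' (interior s)) : ConvexOn ℝ s f := by
  have hderiv : EqOn f' (deriv f) (interior s) := fun x hx ↦ (hf' x hx).deriv.symm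
  exact (hmono.congr hderiv).convexOn_of_deriv hs hf
    fun x hx ↦ (hf' x hx).differentiableAt.differentiableWithinAt

lemma map_add_map_le_map_add_add_map_zero_of_convexOn {𝕜 : Type*} [Field 𝕜] [LinearOrder 𝕜]
    [IsStrictOrderedRing 𝕜] {s : Set 𝕜} {g : 𝕜 → 𝕜} (hg : ConvexOn 𝕜 s g) {x y : 𝕜}
    (h0 : 0 ∈ s) (hxy : x + y ∈ s) (hx : 0 ≤ x) (hy : 0 ≤ y) :
    g x + g y ≤ g (x + y) + g 0 := by
  rcases (add_nonneg hx hy).eq_or_lt with hzero | hpos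
  · obtain ⟨rfl, rfl⟩ := (add_eq_zero_iff_of_nonneg hx hy).1 hzero.symm
    rw [add_zero]
  have hweights : x / (x + y) + y / (x + y) = 1 := by
    rw [← add_div, div_self hpos.ne']
  have hwx : 0 ≤ x / (x + y) := by positivity
  have hwy : 0 ≤ y / (x + y) := by positivity
  have hgx : g x ≤ x / (x + y) * g (x + y) + y / (x + y) * g 0 := by
    simpa [div_mul_cancel₀ _ hpos.ne'] using hg.2 hxy h0 hwx hwy hweights
  have hgy : g y ≤ x / (x + y) * g 0 + y / (x + y) * g (x + y) := by
    simpa [div_mul_cancel₀ _ hpos.ne'] using hg.2 h0 hxy hwx hwy hweights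
  calc g x + g y ≤ (x / (x + y) + y / (x + y)) * (g (x + y) + g 0) := by linarith
    _ = g (x + y) + g 0 := by rw [hweights, one_mul]

lemma map_add_map_le_map_add_of_monotoneOn_deriv {d : ℝ} {g g' : ℝ → ℝ}
    (hg' : ∀ t ∈ Icc 0 d, HasDerivWithinAt g (g' t) (Icc 0 d) t) (hg0 : g 0 ≤ 0)
    (hmono : MonotoneOn g' (Icc 0 d)) {x y : ℝ} (hx : 0 ≤ x) (hy : 0 ≤ y) (hxy : x + y ≤ d) :
    g x + g y ≤ g (x + y) := by
  have hconvex : ConvexOn ℝ (Icc 0 d) g :=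
    convexOn_of_hasDerivAt_of_monotoneOn (convex_Icc 0 d) (HasDerivWithinAt.continuousOn hg')
      (fun t ht ↦ (hg' t (interior_subset ht)).hasDerivAt (mem_interior_iff_mem_nhds.1 ht))
      (hmono.mono interior_subset)
  have hxy0 : 0 ≤ x + y := add_nonneg hx hy
  linarith [map_add_map_le_map_add_add_map_zero_of_convexOn hconvex
    ⟨le_rfl, hxy0.trans hxy⟩ ⟨hxy0, hxy⟩ hx hy]

lemma map_sub_map_zero_le_of_deriv_add_le {f f' : ℝ → ℝ} {x y : ℝ} (hx : 0 ≤ x) (hy : 0 ≤ y)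
    (hf : ContinuousOn f (Icc 0 (x + y))) (hf' : ∀ t ∈ Ioo 0 (x + y), HasDerivAt f (f' t) t)
    (hadd : ∀ t ∈ Ioo 0 y, f' x + f' t ≤ f' (x + t)) :
    f y - f 0 ≤ f (x + y) - f x - f' x * y := by
  have hcont : ContinuousOn (fun t ↦ f (x + t) - f t - f' x * t) (Icc 0 y) := by
    have hshift : MapsTo (x + ·) (Icc 0 y) (Icc 0 (x + y)) :=
      fun t ht ↦ ⟨add_nonneg hx ht.1, add_le_add le_rfl ht.2⟩
    have hsub : Icc 0 y ⊆ Icc 0 (x + y) := Icc_subset_Icc_right (le_add_of_nonneg_left hx)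
    exact ((hf.comp (by fun_prop) hshift).sub (hf.mono hsub)).sub (by fun_prop)
  have hderiv : ∀ t ∈ Ioo 0 y,
      HasDerivAt (fun t ↦ f (x + t) - f t - f' x * t) (f' (x + t) - f' t - f' x) t := by
    rintro t ⟨ht0, hty⟩
    have hft : HasDerivAt f (f' t) t := hf' t ⟨ht0, by linarith⟩
    have hfxt : HasDerivAt f (f' (x + t)) (x + t) := hf' (x + t) ⟨by linarith, by linarith⟩
    exact ((hfxt.comp_const_add x t).sub hft).sub (hasDerivAt_const_mul (f' x))
  have hmono : MonotoneOn (fun t ↦ f (x + t) - f t - f' x * t) (Icc 0 y) := by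
    refine monotoneOn_of_hasDerivWithinAt_nonneg (f' := fun t ↦ f' (x + t) - f' t - f' x)
      (convex_Icc 0 y) hcont ?_ ?_ <;> rw [interior_Icc]
    · exact fun t ht ↦ (hderiv t ht).hasDerivWithinAt
    · exact fun t ht ↦ by linarith [hadd t ht]
  have hends := hmono (left_mem_Icc.2 hy) (right_mem_Icc.2 hy) hy
  simp only [add_zero, mul_zero] at hends
  linarith

lemma sq_le_sq_div_two_of_le_inv_sqrt_two_mul {r s : ℝ} (hr : 0 ≤ r)
    (h : r ≤ 1 / √2 * s) : r ^ 2 ≤ s ^ 2 / 2 :=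
  calc r ^ 2 ≤ (1 / √2 * s) ^ 2 := by gcongr
    _ = s ^ 2 / 2 := by
      rw [mul_pow, div_pow, Real.sq_sqrt zero_le_two]
      ring

theorem stmt3_general {E : Type*} [SeminormedAddGroup E] {d : ℝ} {F F' : ℝ → ℝ}
    (hF' : ∀ t ∈ Icc 0 d, HasDerivWithinAt F (F' t) (Icc 0 d) t) (hF0 : F 0 = 0)
    (hF'nonneg : ∀ t ∈ Icc 0 d, 0 ≤ F' t)
    (hadd : ∀ x y, 0 ≤ x → 0 ≤ y → x + y ≤ d → F' x + F' y ≤ F' (x + y)) :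
    (∀ a b : ℝ, 0 ≤ b → b ≤ a / 2 → a ≤ d → F a - F b - F' b * (a - b) ≥ F (a / 2)) ∧
      (∀ ζ z : E, ‖ζ‖ ≤ (1 / √2) * ‖z‖ → ‖z‖ ^ 2 ≤ d →
        F (‖z‖ ^ 2) - F (‖ζ‖ ^ 2) - F' (‖ζ‖ ^ 2) * (‖z‖ ^ 2 - ‖ζ‖ ^ 2) ≥ F (‖z‖ ^ 2 / 2)) := by
  have hcont : ContinuousOn F (Icc 0 d) := HasDerivWithinAt.continuousOn hF'
  have hderiv : ∀ t ∈ Ioo 0 d, HasDerivAt F (F' t) t := fun t ht ↦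
    (hF' t (Ioo_subset_Icc_self ht)).hasDerivAt (Icc_mem_nhds ht.1 ht.2)
  have hmono : MonotoneOn F (Icc 0 d) :=
    monotoneOn_of_hasDerivWithinAt_nonneg (convex_Icc 0 d) hcont
      (fun t ht ↦ (hF' t (interior_subset ht)).mono interior_subset)
      fun t ht ↦ hF'nonneg t (interior_subset ht)
  have hreal : ∀ a b : ℝ, 0 ≤ b → b ≤ a / 2 → a ≤ d →
      F a - F b - F' b * (a - b) ≥ F (a / 2) := by
    intro a b hb hba had
    have hincr : F (a - b) - F 0 ≤ F (b + (a - b)) - F b - F' b * (a - b) :=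
      map_sub_map_zero_le_of_deriv_add_le hb (by linarith)
        (hcont.mono (Icc_subset_Icc_right (by linarith)))
        (fun t ht ↦ hderiv t ⟨ht.1, by linarith [ht.2]⟩)
        fun t ht ↦ hadd b t hb ht.1.le (by linarith [ht.2])
    have hhalf : F (a / 2) ≤ F (a - b) :=
      hmono ⟨by linarith, by linarith⟩ ⟨by linarith, by linarith⟩ (by linarith)
    rw [add_sub_cancel, hF0, sub_zero] at hincr
    exact hhalf.trans hincr
  exact ⟨hreal, fun ζ z hζz hz ↦ hreal _ _ (by positivity)
    (sq_le_sq_div_two_of_le_inv_sqrt_two_mul (norm_nonneg ζ) hζz) hz⟩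

/-- if `F` is C² on `[0,d]` with `F(0) = 0`, `F'(0) = 0`, `F' ≥ 0`, and `F''`
nondecreasing on `[0,d]`, then `F(a) − F(b) − F'(b)(a−b) ≥ F(a/2)` for all `0 ≤ b ≤ a/2`
with `a ≤ d`.  In particular, for `ζ₁, z₁ ∈ ℂ` with `|ζ₁| ≤ |z₁|/√2` and `|z₁|² ≤ d`,
`F(|z₁|²) − F(|ζ₁|²) − F'(|ζ₁|²)(|z₁|² − |ζ₁|²) ≥ F(|z₁|²/2)`. -/
theorem stmt3 (d : ℝ) (hd : 0 < d) (F F' F'' : ℝ → ℝ)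
    (hF : ContDiffOn ℝ 2 F (Set.Icc 0 d))
    (hF' : ∀ t ∈ Set.Icc 0 d, HasDerivWithinAt F (F' t) (Set.Icc 0 d) t)
    (hF'' : ∀ t ∈ Set.Icc 0 d, HasDerivWithinAt F' (F'' t) (Set.Icc 0 d) t)
    (hF0 : F 0 = 0) (hF'0 : F' 0 = 0)
    (hF'nonneg : ∀ t ∈ Set.Icc 0 d, 0 ≤ F' t)
    (hmono : MonotoneOn F'' (Set.Icc 0 d)) :
    (∀ a b : ℝ, 0 ≤ b → b ≤ a / 2 → a ≤ d →
        F a - F b - F' b * (a - b) ≥ F (a / 2)) ∧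
      (∀ ζ₁ z₁ : ℂ, ‖ζ₁‖ ≤ (1 / Real.sqrt 2) * ‖z₁‖ →
        ‖z₁‖ ^ 2 ≤ d →
        F (‖z₁‖ ^ 2) - F (‖ζ₁‖ ^ 2) -
            F' (‖ζ₁‖ ^ 2) * (‖z₁‖ ^ 2 - ‖ζ₁‖ ^ 2) ≥
          F (‖z₁‖ ^ 2 / 2)) :=
  stmt3_general hF' hF0 hF'nonneg fun _ _ ↦
    map_add_map_le_map_add_of_monotoneOn_deriv hF'' hF'0.le hmono
end

section
/- Let d > 0 and let F : [0, d²] → [0, ∞) be nondecreasing with F(t) > 0 for t > 0. If ∫₀^d |log t · log F(t²)| dt < ∞, then for every δ ∈ (0, min(d, 1)) the triple integral ∫₀^δ ∫₀^δ ∫₀^δ 1/( (t + F(x²))·(x + y) ) dy dt dx is finite. -/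
open MeasureTheory Set ENNReal

/-! The integrals in `t` and `y` separate, and for fixed `x` they evaluate to
`log (1 + δ / F (x²)) * log (1 + δ / x)`. Since `log (1 + δ / a)` is at most a constant multiple of
`1 + |log a|`, what remains is the integrability of `(1 + |log x|) * |log F (x²)|`. For `δ < 1` the
function `|log x|` is bounded away from `0` on `(0, δ]`, so it absorbs the summand `1`. -/

lemma setLIntegral_Ioc_one_div_add {a δ : ℝ} (ha : 0 < a) (hδ : 0 ≤ δ) :
    ∫⁻ t in Ioc 0 δ, ENNReal.ofReal (1 / (t + a)) = ENNReal.ofReal (Real.log (1 + δ / a)) := by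
  have h_int : IntegrableOn (fun t : ℝ => 1 / (t + a)) (Ioc 0 δ) := by
    have h_cont : ContinuousOn (fun t : ℝ => 1 / (t + a)) (Icc 0 δ) :=
      continuousOn_const.div (by fun_prop) fun t ht => (add_pos_of_nonneg_of_pos ht.1 ha).ne'
    exact h_cont.integrableOn_Icc.mono_set Ioc_subset_Icc_self
  have h_nonneg : 0 ≤ᵐ[volume.restrict (Ioc 0 δ)] fun t : ℝ => 1 / (t + a) := by
    filter_upwards [ae_restrict_mem measurableSet_Ioc] with t ht
    exact one_div_nonneg.2 (add_pos ht.1 ha).le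
  rw [← ofReal_integral_eq_lintegral_ofReal h_int h_nonneg, ← intervalIntegral.integral_of_le hδ,
    intervalIntegral.integral_comp_add_right (fun t => 1 / t) a,
    integral_one_div_of_pos (by linarith) (by linarith), zero_add, add_div, div_self ha.ne',
    add_comm]

lemma lintegral_lintegral_one_div_add_mul_add {a b δ : ℝ} (ha : 0 < a) (hb : 0 < b) (hδ : 0 ≤ δ) :
    ∫⁻ t in Ioc 0 δ, ∫⁻ y in Ioc 0 δ, ENNReal.ofReal (1 / ((t + a) * (b + y))) =
      ENNReal.ofReal (Real.log (1 + δ / a)) * ENNReal.ofReal (Real.log (1 + δ / b)) := by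
  rw [← setLIntegral_Ioc_one_div_add ha hδ, ← setLIntegral_Ioc_one_div_add hb hδ,
    ← lintegral_lintegral_mul (by fun_prop) (by fun_prop)]
  refine setLIntegral_congr_fun measurableSet_Ioc fun t ht => lintegral_congr fun y => ?_
  have h_nonneg : 0 ≤ 1 / (t + a) := one_div_nonneg.2 (add_pos ht.1 ha).le
  rw [← ENNReal.ofReal_mul h_nonneg, one_div_mul_one_div, add_comm b y]

lemma log_one_add_div_le {a δ : ℝ} (ha : 0 < a) (hδ : 0 ≤ δ) :
    Real.log (1 + δ / a) ≤ Real.log (1 + δ) + |Real.log a| := by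
  have h_one : 1 ≤ Real.exp |Real.log a| := Real.one_le_exp (abs_nonneg _)
  have h_inv : a⁻¹ ≤ Real.exp |Real.log a| := by
    rw [← Real.exp_log (inv_pos.2 ha), Real.log_inv]
    exact Real.exp_le_exp.2 (neg_le_abs _)
  calc Real.log (1 + δ / a)
      ≤ Real.log ((1 + δ) * Real.exp |Real.log a|) := by
        refine Real.log_le_log (by positivity) ?_
        rw [div_eq_mul_inv, add_mul, one_mul]
        gcongr
    _ = Real.log (1 + δ) + |Real.log a| := by
        rw [Real.log_mul (by positivity) (Real.exp_ne_zero _), Real.log_exp]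

lemma log_one_add_div_le_mul {a δ : ℝ} (ha : 0 < a) (hδ : 0 ≤ δ) :
    Real.log (1 + δ / a) ≤ (1 + Real.log (1 + δ)) * (1 + |Real.log a|) := by
  have h_log : 0 ≤ Real.log (1 + δ) := Real.log_nonneg (by linarith)
  nlinarith [log_one_add_div_le ha hδ, mul_nonneg h_log (abs_nonneg (Real.log a))]

lemma lintegral_lintegral_one_div_add_mul_add_le {a b δ : ℝ} (ha : 0 < a) (hb : 0 < b)
    (hδ : 0 ≤ δ) :
    ∫⁻ t in Ioc 0 δ, ∫⁻ y in Ioc 0 δ, ENNReal.ofReal (1 / ((t + a) * (b + y))) ≤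
      ENNReal.ofReal ((1 + Real.log (1 + δ)) ^ 2) *
        ENNReal.ofReal ((1 + |Real.log a|) * (1 + |Real.log b|)) := by
  have hC : 0 ≤ 1 + Real.log (1 + δ) := add_nonneg zero_le_one (Real.log_nonneg (by linarith))
  calc ∫⁻ t in Ioc 0 δ, ∫⁻ y in Ioc 0 δ, ENNReal.ofReal (1 / ((t + a) * (b + y)))
      = ENNReal.ofReal (Real.log (1 + δ / a)) * ENNReal.ofReal (Real.log (1 + δ / b)) :=
        lintegral_lintegral_one_div_add_mul_add ha hb hδ
    _ ≤ ENNReal.ofReal ((1 + Real.log (1 + δ)) * (1 + |Real.log a|)) *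
          ENNReal.ofReal ((1 + Real.log (1 + δ)) * (1 + |Real.log b|)) := by
        gcongr
        · exact log_one_add_div_le_mul ha hδ
        · exact log_one_add_div_le_mul hb hδ
    _ = ENNReal.ofReal ((1 + Real.log (1 + δ)) ^ 2) *
          ENNReal.ofReal ((1 + |Real.log a|) * (1 + |Real.log b|)) := by
        rw [← ENNReal.ofReal_mul (by positivity), ← ENNReal.ofReal_mul (by positivity),
          mul_mul_mul_comm, ← sq]

lemma setLIntegral_Ioc_one_add_abs_log_lt_top (δ : ℝ) :
    ∫⁻ x in Ioc 0 δ, ENNReal.ofReal (1 + |Real.log x|) < ⊤ := by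
  have h_log : IntegrableOn Real.log (Ioc 0 δ) :=
    intervalIntegral.intervalIntegrable_log'.1
  exact ((integrable_const 1).add h_log.abs).lintegral_lt_top

theorem lintegral_one_div_add_mul_add_lt_top {δ : ℝ} (hδ : 0 ≤ δ) {f : ℝ → ℝ}
    (hf : ∀ x ∈ Ioc 0 δ, 0 < f x)
    (hlog : ∫⁻ x in Ioc 0 δ, ENNReal.ofReal ((1 + |Real.log x|) * |Real.log (f x)|) < ⊤) :
    ∫⁻ x in Ioc 0 δ, ∫⁻ t in Ioc 0 δ, ∫⁻ y in Ioc 0 δ,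
      ENNReal.ofReal (1 / ((t + f x) * (x + y))) < ⊤ := by
  calc ∫⁻ x in Ioc 0 δ, ∫⁻ t in Ioc 0 δ, ∫⁻ y in Ioc 0 δ,
        ENNReal.ofReal (1 / ((t + f x) * (x + y)))
      ≤ ∫⁻ x in Ioc 0 δ, ENNReal.ofReal ((1 + Real.log (1 + δ)) ^ 2) *
          ENNReal.ofReal ((1 + |Real.log (f x)|) * (1 + |Real.log x|)) :=
        setLIntegral_mono' measurableSet_Ioc fun x hx =>
          lintegral_lintegral_one_div_add_mul_add_le (hf x hx) hx.1 hδ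
    _ = ENNReal.ofReal ((1 + Real.log (1 + δ)) ^ 2) *
          ∫⁻ x in Ioc 0 δ, ENNReal.ofReal ((1 + |Real.log (f x)|) * (1 + |Real.log x|)) :=
        lintegral_const_mul' _ _ ofReal_ne_top
    _ = ENNReal.ofReal ((1 + Real.log (1 + δ)) ^ 2) *
          ((∫⁻ x in Ioc 0 δ, ENNReal.ofReal (1 + |Real.log x|)) +
            ∫⁻ x in Ioc 0 δ, ENNReal.ofReal ((1 + |Real.log x|) * |Real.log (f x)|)) := by
        rw [← lintegral_add_left (by fun_prop)]
        congr! with x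
        rw [← ENNReal.ofReal_add (by positivity) (by positivity)]
        ring_nf
    _ < ⊤ := mul_lt_top ofReal_lt_top
        (add_lt_top.2 ⟨setLIntegral_Ioc_one_add_abs_log_lt_top δ, hlog⟩)

lemma one_add_abs_log_le_mul {x δ : ℝ} (hx : x ∈ Ioc 0 δ) (hδ : δ < 1) :
    1 + |Real.log x| ≤ (1 + |Real.log δ|⁻¹) * |Real.log x| := by
  have hδ_log : Real.log δ < 0 := Real.log_neg (hx.1.trans_le hx.2) hδ
  have h_abs : |Real.log δ| ≤ |Real.log x| :=
    abs_le_abs_of_nonpos hδ_log.le (Real.log_le_log hx.1 hx.2)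
  have h_one : 1 ≤ |Real.log δ|⁻¹ * |Real.log x| := by
    rwa [← div_eq_inv_mul, one_le_div (abs_pos.2 hδ_log.ne)]
  linarith

lemma setLIntegral_one_add_abs_log_mul_lt_top {δ : ℝ} (hδ : δ < 1) {g : ℝ → ℝ}
    (hg : ∫⁻ x in Ioc 0 δ, ENNReal.ofReal |Real.log x * g x| < ⊤) :
    ∫⁻ x in Ioc 0 δ, ENNReal.ofReal ((1 + |Real.log x|) * |g x|) < ⊤ := by
  calc ∫⁻ x in Ioc 0 δ, ENNReal.ofReal ((1 + |Real.log x|) * |g x|)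
      ≤ ∫⁻ x in Ioc 0 δ, ENNReal.ofReal (1 + |Real.log δ|⁻¹) *
          ENNReal.ofReal |Real.log x * g x| := by
        refine setLIntegral_mono' measurableSet_Ioc fun x hx => ?_
        rw [← ENNReal.ofReal_mul (by positivity), abs_mul, ← mul_assoc]
        gcongr
        exact one_add_abs_log_le_mul hx hδ
    _ < ⊤ := by
        rw [lintegral_const_mul' _ _ ofReal_ne_top]
        exact mul_lt_top ofReal_lt_top hg

theorem stmt10_general {d : ℝ} {F : ℝ → ℝ} (hpos : ∀ t ∈ Ioc 0 (d ^ 2), 0 < F t)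
    (hlog : ∫⁻ t in Ioc 0 d, ENNReal.ofReal |Real.log t * Real.log (F (t ^ 2))| < ⊤)
    {δ : ℝ} (hδ : δ ∈ Ioc 0 d) (hδ_lt_one : δ < 1) :
    ∫⁻ x in Ioc 0 δ, ∫⁻ t in Ioc 0 δ, ∫⁻ y in Ioc 0 δ,
      ENNReal.ofReal (1 / ((t + F (x ^ 2)) * (x + y))) < ⊤ := by
  have hlog_δ : ∫⁻ t in Ioc 0 δ, ENNReal.ofReal |Real.log t * Real.log (F (t ^ 2))| < ⊤ :=
    (lintegral_mono_set (Ioc_subset_Ioc_right hδ.2)).trans_lt hlog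
  refine lintegral_one_div_add_mul_add_lt_top (f := fun x => F (x ^ 2)) hδ.1.le
    (fun x hx => hpos _ ⟨pow_pos hx.1 2, ?_⟩)
    (setLIntegral_one_add_abs_log_mul_lt_top hδ_lt_one hlog_δ)
  exact pow_le_pow_left₀ hx.1.le (hx.2.trans hδ.2) 2

/-- if `F : [0,d²] → [0,∞)` is nondecreasing, positive for positive
arguments, and `∫₀^d |log t · log F(t²)| dt < ∞`, then for each `δ ∈ (0, min d 1)` the
triple integral `∫₀^δ ∫₀^δ ∫₀^δ 1/((t + F(x²))(x + y)) dy dt dx` is finite. -/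
theorem stmt10 (d : ℝ) (hd : 0 < d) (F : ℝ → ℝ)
    (hmono : MonotoneOn F (Set.Icc 0 (d ^ 2)))
    (hnonneg : ∀ t ∈ Set.Icc 0 (d ^ 2), 0 ≤ F t)
    (hpos : ∀ t ∈ Set.Ioc 0 (d ^ 2), 0 < F t)
    (hlog : ∫⁻ t in Set.Ioc (0 : ℝ) d,
        ENNReal.ofReal |Real.log t * Real.log (F (t ^ 2))| < ⊤) :
    ∀ δ ∈ Set.Ioo (0 : ℝ) (min d 1),
      ∫⁻ x in Set.Ioc (0 : ℝ) δ, ∫⁻ t in Set.Ioc (0 : ℝ) δ, ∫⁻ y in Set.Ioc (0 : ℝ) δ,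
        ENNReal.ofReal (1 / ((t + F (x ^ 2)) * (x + y))) < ⊤ := by
  intro δ hδ
  exact stmt10_general hpos hlog ⟨hδ.1, (hδ.2.trans_le (min_le_left d 1)).le⟩
    (hδ.2.trans_le (min_le_right d 1))
end

section
/- Let Ω ⊂ ℂ² be an open convex set containing 0. For j, k ∈ {1,2} let α_{jk} : Ω → ℂ be smooth functions satisfying the Hermitian symmetry α_{kj} = conj(α_{jk}) and the d-closedness relations ∂α_{jk}/∂z_l = ∂α_{lk}/∂z_j and ∂α_{jk}/∂z̄_l = ∂α_{jl}/∂z̄_k on Ω for all j, k, l ∈ {1,2}. Define f_k(z) = Σ_{j=1}^{2} z_j ∫₀¹ t·α_{jk}(t z) dt for z ∈ Ω, k ∈ {1,2}. Then on Ω: (i) ∂f_k/∂z̄_l = ∂f_l/∂z̄_k for all k, l ∈ {1,2} (i.e. the (0,1)-form f = f₁ dz̄₁ + f₂ dz̄₂ is ∂̄-closed), and (ii) ∂f_k/∂z_j + conj(∂f_j/∂z_k) = α_{jk} for all j, k ∈ {1,2} (i.e. ∂f − ∂̄f̄ = Σ α_{jk} dz_j ∧ dz̄_k). -/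
open Complex Set MeasureTheory

/-- Standard basis vectors of `ℂ²`. -/
def bv (j : Fin 2) : ℂ × ℂ := if j = 0 then (1, 0) else (0, 1)

/-- The basis vectors multiplied by `i`. -/
def ibv (j : Fin 2) : ℂ × ℂ := if j = 0 then (Complex.I, 0) else (0, Complex.I)

/-- The `j`-th coordinate of a point of `ℂ²`. -/
def coordC (j : Fin 2) (z : ℂ × ℂ) : ℂ := if j = 0 then z.1 else z.2

/-- The Wirtinger derivative `∂g/∂z_j` of a complex-valued function on `ℂ²`,
defined via the real Fréchet derivative. -/
noncomputable def wz (j : Fin 2) (g : ℂ × ℂ → ℂ) (ζ : ℂ × ℂ) : ℂ :=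
  (1 / 2 : ℂ) * ((fderiv ℝ g ζ) (bv j) - Complex.I * (fderiv ℝ g ζ) (ibv j))

/-- The Wirtinger derivative `∂g/∂z̄_j` of a complex-valued function on `ℂ²`. -/
noncomputable def wzbar (j : Fin 2) (g : ℂ × ℂ → ℂ) (ζ : ℂ × ℂ) : ℂ :=
  (1 / 2 : ℂ) * ((fderiv ℝ g ζ) (bv j) + Complex.I * (fderiv ℝ g ζ) (ibv j))

/-- The Rudin radial primitive `f_k(z) = Σ_j z_j ∫₀¹ t·α_{jk}(tz) dt`. -/
noncomputable def rudinF (α : Fin 2 → Fin 2 → ℂ × ℂ → ℂ) (k : Fin 2) (z : ℂ × ℂ) : ℂ :=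
  ∑ j : Fin 2, coordC j z * ∫ t in (0 : ℝ)..1, (t : ℂ) * α j k (t • z)

/-!
Along the ray through `z`, the map `t ↦ t ^ (n + 1) • g (t • z)` has derivative
`(n + 1) t ^ n • g (t • z) + t ^ (n + 1) • dg (t • z) z`. Integrating over `[0, 1]` for `n = 1`
writes `g z` as `2 ∫ t • g (t • z)` plus the value at `z` of the form `∫ t ^ 2 • dg (t • z)`.
Differentiating `f_k` under the integral sign produces exactly such moments: closedness turns
`∂f_k/∂z_j` into one copy of the first moment of `g = α_{jk}` plus the `dz` half of that value, and
Hermitian symmetry turns `conj (∂f_j/∂z_k)` into the other copy plus the `dz̄` half.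
-/

open scoped ComplexConjugate Topology

section RadialMoment

variable {E F G : Type*} [NormedAddCommGroup E] [NormedSpace ℝ E]
  [NormedAddCommGroup F] [NormedSpace ℝ F] [NormedAddCommGroup G] [NormedSpace ℝ G]
  {Ω : Set E} {z : E}

/-- The `n`-th moment `∫₀¹ tⁿ g(tz) dt` of `g` along the segment from the origin to `z`; the inner
integrals of `rudinF` are first moments, and their derivatives are second moments. -/
noncomputable def radialMoment (n : ℕ) (g : E → F) (z : E) : F :=
  ∫ t in (0 : ℝ)..1, t ^ n • g (t • z)

theorem radialMoment_congr {g h : E → F} (hstar : StarConvex ℝ 0 Ω) (hgh : EqOn g h Ω)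
    (hz : z ∈ Ω) (n : ℕ) : radialMoment n g z = radialMoment n h z := by
  refine intervalIntegral.integral_congr fun t ht => ?_
  rw [uIcc_of_le zero_le_one] at ht
  simp only [hgh (hstar.smul_mem hz ht.1 ht.2)]

theorem radialMoment_conj (n : ℕ) (g : E → ℂ) (z : E) :
    radialMoment n (fun w => conj (g w)) z = conj (radialMoment n g z) := by
  simp only [radialMoment, ← intervalIntegral.intervalIntegral_conj, real_smul, map_mul,
    conj_ofReal]

theorem continuousOn_pow_smul_comp_smul {g : E → F} (hg : ContinuousOn g Ω)
    (hstar : StarConvex ℝ 0 Ω) (hz : z ∈ Ω) (n : ℕ) :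
    ContinuousOn (fun t : ℝ => t ^ n • g (t • z)) (Icc 0 1) :=
  (continuousOn_pow n).smul <|
    hg.comp (by fun_prop) fun _ ht => hstar.smul_mem hz ht.1 ht.2

theorem intervalIntegrable_pow_smul_comp_smul {g : E → F} (hg : ContinuousOn g Ω)
    (hstar : StarConvex ℝ 0 Ω) (hz : z ∈ Ω) (n : ℕ) :
    IntervalIntegrable (fun t : ℝ => t ^ n • g (t • z)) volume 0 1 :=
  (continuousOn_pow_smul_comp_smul hg hstar hz n).intervalIntegrable_of_Icc zero_le_one

theorem radialMoment_clm_comp [CompleteSpace F] [CompleteSpace G]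
    (L : F →L[ℝ] G) {g : E → F} (hg : ContinuousOn g Ω) (hstar : StarConvex ℝ 0 Ω) (hz : z ∈ Ω)
    (n : ℕ) : radialMoment n (fun w => L (g w)) z = L (radialMoment n g z) := by
  simp only [radialMoment, ← map_smul]
  exact L.intervalIntegral_comp_comm (intervalIntegrable_pow_smul_comp_smul hg hstar hz n)

theorem exists_eventually_forall_norm_comp_smul_le {g : E → F} (hopen : IsOpen Ω)
    (hstar : StarConvex ℝ 0 Ω) (hg : ContinuousOn g Ω) (hz : z ∈ Ω) :
    ∃ C, ∀ᶠ w in 𝓝 z, ∀ t ∈ Icc (0 : ℝ) 1, ‖g (t • w)‖ ≤ C := by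
  have hray : ContinuousOn (fun t : ℝ => g (t • z)) (Icc 0 1) := by
    simpa only [pow_zero, one_smul] using continuousOn_pow_smul_comp_smul hg hstar hz 0
  obtain ⟨C, hC⟩ := isCompact_Icc.exists_bound_of_continuousOn hray
  refine ⟨C + 1, isCompact_Icc.eventually_forall_of_forall_eventually fun t ht => ?_⟩
  have hcont : ContinuousAt (fun p : E × ℝ => g (p.2 • p.1)) (z, t) :=
    ContinuousAt.comp (g := g) (f := fun p : E × ℝ => p.2 • p.1)
      (hg.continuousAt (hopen.mem_nhds (hstar.smul_mem hz ht.1 ht.2))) (by fun_prop)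
  exact (hcont.norm.eventually_lt_const ((hC t ht).trans_lt (lt_add_one C))).mono
    fun _ hp => hp.le

theorem hasFDerivAt_radialMoment {g : E → F} (hopen : IsOpen Ω) (hstar : StarConvex ℝ 0 Ω)
    (hg : ContDiffOn ℝ 1 g Ω) (hz : z ∈ Ω) (n : ℕ) :
    HasFDerivAt (radialMoment n g) (radialMoment (n + 1) (fderiv ℝ g) z) z := by
  have hg' : ContinuousOn (fderiv ℝ g) Ω := hg.continuousOn_fderiv_of_isOpen hopen le_rfl
  obtain ⟨C, hC⟩ := exists_eventually_forall_norm_comp_smul_le hopen hstar hg' hz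
  have hIoc : uIoc (0 : ℝ) 1 = Ioc 0 1 := uIoc_of_le zero_le_one
  refine intervalIntegral.hasFDerivAt_integral_of_dominated_of_fderiv_le (𝕜 := ℝ)
    (F := fun w t => t ^ n • g (t • w)) (F' := fun w t => t ^ (n + 1) • fderiv ℝ g (t • w))
    (bound := fun _ => C) (hC.and (hopen.mem_nhds hz))
    ?_ (intervalIntegrable_pow_smul_comp_smul hg.continuousOn hstar hz n)
    (intervalIntegrable_pow_smul_comp_smul hg' hstar hz (n + 1)).def'.aestronglyMeasurable
    (.of_forall fun t ht w hw => ?_) intervalIntegrable_const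
    (.of_forall fun t ht w hw => ?_)
  · filter_upwards [hopen.mem_nhds hz] with w hw
    exact (intervalIntegrable_pow_smul_comp_smul hg.continuousOn hstar hw
      n).def'.aestronglyMeasurable
  · rw [hIoc] at ht
    have hpow : ‖t ^ (n + 1)‖ ≤ 1 := by
      rw [Real.norm_of_nonneg (pow_nonneg ht.1.le _)]
      exact pow_le_one₀ ht.1.le ht.2
    calc ‖t ^ (n + 1) • fderiv ℝ g (t • w)‖
        ≤ 1 * ‖fderiv ℝ g (t • w)‖ := by rw [norm_smul]; gcongr
      _ ≤ C := by rw [one_mul]; exact hw.1 t (Ioc_subset_Icc_self ht)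
  · rw [hIoc] at ht
    have hgt : HasFDerivAt g (fderiv ℝ g (t • w)) (t • w) :=
      (hg.differentiableOn one_ne_zero).hasFDerivAt
        (hopen.mem_nhds (hstar.smul_mem hw.2 ht.1.le ht.2))
    refine ((hgt.comp w ((hasFDerivAt_id w).const_smul t)).const_smul (t ^ n)).congr_fderiv ?_
    ext v
    simp [pow_succ, mul_smul]

theorem hasDerivAt_pow_succ_smul_comp_smul {g : E → F} {g' : E →L[ℝ] F} {t : ℝ}
    (hg : HasFDerivAt g g' (t • z)) (n : ℕ) :
    HasDerivAt (fun s : ℝ => s ^ (n + 1) • g (s • z))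
      ((n + 1 : ℝ) • t ^ n • g (t • z) + (t ^ (n + 1) • g') z) t := by
  have hray : HasDerivAt (fun s : ℝ => g (s • z)) (g' ((1 : ℝ) • z)) t :=
    hg.comp_hasDerivAt t ((hasDerivAt_id t).smul_const z)
  refine ((hasDerivAt_pow (n + 1) t).smul hray).congr_deriv ?_
  simp [mul_smul, add_comm]

theorem radialMoment_add_radialMoment_fderiv [CompleteSpace F] {g : E → F} (hopen : IsOpen Ω)
    (hstar : StarConvex ℝ 0 Ω) (hg : ContDiffOn ℝ 1 g Ω) (hz : z ∈ Ω) (n : ℕ) :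
    (n + 1 : ℝ) • radialMoment n g z + radialMoment (n + 1) (fderiv ℝ g) z z = g z := by
  have hint : IntervalIntegrable (fun t : ℝ => (n + 1 : ℝ) • t ^ n • g (t • z)) volume 0 1 :=
    (intervalIntegrable_pow_smul_comp_smul hg.continuousOn hstar hz n).smul (n + 1 : ℝ)
  have hint_fderiv := intervalIntegrable_pow_smul_comp_smul
    (hg.continuousOn_fderiv_of_isOpen hopen le_rfl) hstar hz (n + 1)
  have hint_apply :
      IntervalIntegrable (fun t : ℝ => (t ^ (n + 1) • fderiv ℝ g (t • z)) z) volume 0 1 :=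
    ⟨hint_fderiv.1.apply_continuousLinearMap z, hint_fderiv.2.apply_continuousLinearMap z⟩
  have hderiv : ∀ t ∈ uIcc (0 : ℝ) 1, HasDerivAt (fun t : ℝ => t ^ (n + 1) • g (t • z))
      ((n + 1 : ℝ) • t ^ n • g (t • z) + (t ^ (n + 1) • fderiv ℝ g (t • z)) z) t := by
    intro t ht
    rw [uIcc_of_le zero_le_one] at ht
    exact hasDerivAt_pow_succ_smul_comp_smul ((hg.differentiableOn one_ne_zero).hasFDerivAt
      (hopen.mem_nhds (hstar.smul_mem hz ht.1 ht.2))) n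
  calc (n + 1 : ℝ) • radialMoment n g z + radialMoment (n + 1) (fderiv ℝ g) z z
      = ∫ t in (0 : ℝ)..1, ((n + 1 : ℝ) • t ^ n • g (t • z) +
          (t ^ (n + 1) • fderiv ℝ g (t • z)) z) := by
        rw [intervalIntegral.integral_add hint hint_apply, intervalIntegral.integral_smul,
          ← ContinuousLinearMap.intervalIntegral_apply hint_fderiv]
        rfl
    _ = (1 : ℝ) ^ (n + 1) • g ((1 : ℝ) • z) - (0 : ℝ) ^ (n + 1) • g ((0 : ℝ) • z) :=
        intervalIntegral.integral_eq_sub_of_hasDerivAt hderiv (hint.add hint_apply)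
    _ = g z := by simp

end RadialMoment

section Wirtinger

/-- The coordinate function `coordC j` as a real-linear map. -/
noncomputable def coordCLM (j : Fin 2) : ℂ × ℂ →L[ℝ] ℂ :=
  if j = 0 then ContinuousLinearMap.fst ℝ ℂ ℂ else ContinuousLinearMap.snd ℝ ℂ ℂ

/-- The coefficient of `dz_j` in a real-linear form on `ℂ²`, so that `wz j g z` is its value at
`fderiv ℝ g z`; it is complex linear in the form. -/
noncomputable def wzCLM (j : Fin 2) : (ℂ × ℂ →L[ℝ] ℂ) →L[ℂ] ℂ where
  toFun L := (1 / 2 : ℂ) * (L (bv j) - I * L (ibv j))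
  map_add' L M := by simp only [add_apply]; ring
  map_smul' c L := by simp only [smul_apply, smul_eq_mul, RingHom.id_apply]; ring
  cont := by fun_prop

/-- The coefficient of `dz̄_j` in a real-linear form on `ℂ²`, so that `wzbar j g z` is its value at
`fderiv ℝ g z`; it is complex linear in the form. -/
noncomputable def wzbarCLM (j : Fin 2) : (ℂ × ℂ →L[ℝ] ℂ) →L[ℂ] ℂ where
  toFun L := (1 / 2 : ℂ) * (L (bv j) + I * L (ibv j))
  map_add' L M := by simp only [add_apply]; ring
  map_smul' c L := by simp only [smul_apply, smul_eq_mul, RingHom.id_apply]; ring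
  cont := by fun_prop

theorem wzCLM_apply (j : Fin 2) (L : ℂ × ℂ →L[ℝ] ℂ) :
    wzCLM j L = (1 / 2 : ℂ) * (L (bv j) - I * L (ibv j)) := rfl

theorem wzbarCLM_apply (j : Fin 2) (L : ℂ × ℂ →L[ℝ] ℂ) :
    wzbarCLM j L = (1 / 2 : ℂ) * (L (bv j) + I * L (ibv j)) := rfl

theorem wz_eq_wzCLM_fderiv (j : Fin 2) (g : ℂ × ℂ → ℂ) (z : ℂ × ℂ) :
    wz j g z = wzCLM j (fderiv ℝ g z) := rfl

theorem wzbar_eq_wzbarCLM_fderiv (j : Fin 2) (g : ℂ × ℂ → ℂ) (z : ℂ × ℂ) :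
    wzbar j g z = wzbarCLM j (fderiv ℝ g z) := rfl

theorem coe_coordCLM (j : Fin 2) : ⇑(coordCLM j) = coordC j := by
  fin_cases j <;> rfl

theorem wzCLM_coordCLM (l j : Fin 2) : wzCLM l (coordCLM j) = if j = l then 1 else 0 := by
  fin_cases l <;> fin_cases j <;> norm_num [wzCLM_apply, coordCLM, bv, ibv]

theorem wzbarCLM_coordCLM (l j : Fin 2) : wzbarCLM l (coordCLM j) = 0 := by
  fin_cases l <;> fin_cases j <;> simp [wzbarCLM_apply, coordCLM, bv, ibv]

theorem eq_sum_re_smul_bv_add_im_smul_ibv (v : ℂ × ℂ) :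
    v = ∑ j, ((coordC j v).re • bv j + (coordC j v).im • ibv j) := by
  ext <;> simp [coordC, bv, ibv]

theorem clm_apply_eq_sum_wzCLM_add_wzbarCLM (L : ℂ × ℂ →L[ℝ] ℂ) (v : ℂ × ℂ) :
    L v = ∑ j, (coordC j v * wzCLM j L + conj (coordC j v) * wzbarCLM j L) := by
  conv_lhs => rw [eq_sum_re_smul_bv_add_im_smul_ibv v]
  simp only [map_sum, map_add, map_smul, real_smul]
  refine Finset.sum_congr rfl fun j _ => ?_
  have hcoord := re_add_im (coordC j v)
  have hconj : conj (coordC j v) = (coordC j v).re - (coordC j v).im * I :=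
    Complex.ext (by simp) (by simp)
  rw [wzCLM_apply, wzbarCLM_apply]
  linear_combination (1 / 2 * (L (bv j) - I * L (ibv j))) * hcoord -
    (1 / 2 * (L (bv j) + I * L (ibv j))) * hconj + (coordC j v).im * L (ibv j) * I_sq

theorem wzbar_eq_conj_wz {g h : ℂ × ℂ → ℂ} {z : ℂ × ℂ} (hgh : h =ᶠ[𝓝 z] fun w => conj (g w))
    (j : Fin 2) : wzbar j h z = conj (wz j g z) := by
  have hfderiv : fderiv ℝ h z = (conjCLE : ℂ →L[ℝ] ℂ).comp (fderiv ℝ g z) :=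
    hgh.fderiv_eq.trans conjCLE.comp_fderiv
  simp [wz, wzbar, hfderiv, map_ofNat]

theorem radialMoment_add_sum_wirtinger {Ω : Set (ℂ × ℂ)} {g : ℂ × ℂ → ℂ} {z : ℂ × ℂ}
    (hopen : IsOpen Ω) (hstar : StarConvex ℝ 0 Ω) (hg : ContDiffOn ℝ 1 g Ω) (hz : z ∈ Ω) (n : ℕ) :
    (n + 1) * radialMoment n g z + ∑ j, (coordC j z * radialMoment (n + 1) (wz j g) z +
      conj (coordC j z) * radialMoment (n + 1) (wzbar j g) z) = g z := by
  have hg' := hg.continuousOn_fderiv_of_isOpen hopen le_rfl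
  have hwz : ∀ j, radialMoment (n + 1) (wz j g) z =
      wzCLM j (radialMoment (n + 1) (fderiv ℝ g) z) := fun j =>
    radialMoment_clm_comp ((wzCLM j).restrictScalars ℝ) hg' hstar hz (n + 1)
  have hwzbar : ∀ j, radialMoment (n + 1) (wzbar j g) z =
      wzbarCLM j (radialMoment (n + 1) (fderiv ℝ g) z) := fun j =>
    radialMoment_clm_comp ((wzbarCLM j).restrictScalars ℝ) hg' hstar hz (n + 1)
  simp only [hwz, hwzbar, ← clm_apply_eq_sum_wzCLM_add_wzbarCLM]
  simpa using radialMoment_add_radialMoment_fderiv hopen hstar hg hz n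

end Wirtinger

section RudinPrimitive

variable {Ω : Set (ℂ × ℂ)} {α : Fin 2 → Fin 2 → ℂ × ℂ → ℂ} {z : ℂ × ℂ}

theorem rudinF_eq_sum_radialMoment (α : Fin 2 → Fin 2 → ℂ × ℂ → ℂ) (k : Fin 2) :
    rudinF α k = fun z => ∑ j, coordC j z * radialMoment 1 (α j k) z := by
  funext z
  simp only [rudinF, radialMoment, pow_one, real_smul]

theorem hasFDerivAt_rudinF (hopen : IsOpen Ω) (hstar : StarConvex ℝ 0 Ω) {k : Fin 2}
    (hα : ∀ j, ContDiffOn ℝ 1 (α j k) Ω) (hz : z ∈ Ω) :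
    HasFDerivAt (rudinF α k) (∑ j, (coordC j z • radialMoment 2 (fderiv ℝ (α j k)) z +
      radialMoment 1 (α j k) z • coordCLM j)) z := by
  rw [rudinF_eq_sum_radialMoment]
  refine HasFDerivAt.fun_sum fun j _ => ?_
  have hcoord : HasFDerivAt (coordC j) (coordCLM j) z :=
    coe_coordCLM j ▸ (coordCLM j).hasFDerivAt
  exact hcoord.mul (hasFDerivAt_radialMoment hopen hstar (hα j) hz 1)

theorem map_fderiv_rudinF (D : (ℂ × ℂ →L[ℝ] ℂ) →L[ℂ] ℂ) (hopen : IsOpen Ω)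
    (hstar : StarConvex ℝ 0 Ω) {k : Fin 2} (hα : ∀ j, ContDiffOn ℝ 1 (α j k) Ω) (hz : z ∈ Ω) :
    D (fderiv ℝ (rudinF α k) z) =
      ∑ j, (coordC j z * radialMoment 2 (fun w => D (fderiv ℝ (α j k) w)) z +
        radialMoment 1 (α j k) z * D (coordCLM j)) := by
  have hcomm : ∀ j, radialMoment 2 (fun w => D (fderiv ℝ (α j k) w)) z =
      D (radialMoment 2 (fderiv ℝ (α j k)) z) := fun j =>
    radialMoment_clm_comp (D.restrictScalars ℝ)
      ((hα j).continuousOn_fderiv_of_isOpen hopen le_rfl) hstar hz 2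
  simp only [(hasFDerivAt_rudinF hopen hstar hα hz).fderiv, map_sum, map_add, map_smul,
    smul_eq_mul, hcomm]

theorem wz_rudinF (hopen : IsOpen Ω) (hstar : StarConvex ℝ 0 Ω) {k : Fin 2}
    (hα : ∀ j, ContDiffOn ℝ 1 (α j k) Ω) (hz : z ∈ Ω) (l : Fin 2) :
    wz l (rudinF α k) z =
      radialMoment 1 (α l k) z + ∑ j, coordC j z * radialMoment 2 (wz l (α j k)) z := by
  rw [wz_eq_wzCLM_fderiv, map_fderiv_rudinF (wzCLM l) hopen hstar hα hz, Finset.sum_add_distrib,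
    add_comm]
  simp only [wzCLM_coordCLM, mul_ite, mul_one, mul_zero, Finset.sum_ite_eq', Finset.mem_univ,
    if_true, ← wz_eq_wzCLM_fderiv]

theorem wzbar_rudinF (hopen : IsOpen Ω) (hstar : StarConvex ℝ 0 Ω) {k : Fin 2}
    (hα : ∀ j, ContDiffOn ℝ 1 (α j k) Ω) (hz : z ∈ Ω) (l : Fin 2) :
    wzbar l (rudinF α k) z = ∑ j, coordC j z * radialMoment 2 (wzbar l (α j k)) z := by
  rw [wzbar_eq_wzbarCLM_fderiv, map_fderiv_rudinF (wzbarCLM l) hopen hstar hα hz]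
  simp only [wzbarCLM_coordCLM, mul_zero, add_zero, ← wzbar_eq_wzbarCLM_fderiv]

theorem wzbar_rudinF_comm (hopen : IsOpen Ω) (hstar : StarConvex ℝ 0 Ω)
    {k l : Fin 2} (hαk : ∀ j, ContDiffOn ℝ 1 (α j k) Ω) (hαl : ∀ j, ContDiffOn ℝ 1 (α j l) Ω)
    (hdzbar : ∀ j, EqOn (wzbar l (α j k)) (wzbar k (α j l)) Ω) (hz : z ∈ Ω) :
    wzbar l (rudinF α k) z = wzbar k (rudinF α l) z := by
  rw [wzbar_rudinF hopen hstar hαk hz, wzbar_rudinF hopen hstar hαl hz]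
  exact Finset.sum_congr rfl fun j _ =>
    congrArg (coordC j z * ·) (radialMoment_congr hstar (hdzbar j) hz 2)

theorem wz_rudinF_of_closed (hopen : IsOpen Ω) (hstar : StarConvex ℝ 0 Ω) {k l : Fin 2}
    (hα : ∀ j, ContDiffOn ℝ 1 (α j k) Ω)
    (hdz : ∀ j, EqOn (wz l (α j k)) (wz j (α l k)) Ω) (hz : z ∈ Ω) :
    wz l (rudinF α k) z =
      radialMoment 1 (α l k) z + ∑ j, coordC j z * radialMoment 2 (wz j (α l k)) z := by
  rw [wz_rudinF hopen hstar hα hz]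
  simp only [fun j => radialMoment_congr hstar (hdz j) hz 2]

theorem wzbar_eq_conj_wz_of_hermitian (hopen : IsOpen Ω)
    (hherm : ∀ j k, ∀ z ∈ Ω, α k j z = conj (α j k z)) (hz : z ∈ Ω) (j k l : Fin 2) :
    wzbar l (α j k) z = conj (wz l (α k j) z) :=
  wzbar_eq_conj_wz (Filter.eventuallyEq_of_mem (hopen.mem_nhds hz) (hherm k j)) l

theorem wzbar_comm_of_hermitian (hopen : IsOpen Ω)
    (hherm : ∀ j k, ∀ z ∈ Ω, α k j z = conj (α j k z))
    (hdz : ∀ j k l, ∀ z ∈ Ω, wz l (α j k) z = wz j (α l k) z) (hz : z ∈ Ω) (j k l : Fin 2) :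
    wzbar l (α j k) z = wzbar k (α j l) z := by
  simp only [wzbar_eq_conj_wz_of_hermitian hopen hherm hz, hdz k j l z hz]

theorem conj_wz_rudinF (hopen : IsOpen Ω) (hstar : StarConvex ℝ 0 Ω)
    (hα : ∀ j k, ContDiffOn ℝ 1 (α j k) Ω)
    (hherm : ∀ j k, ∀ z ∈ Ω, α k j z = conj (α j k z))
    (hdz : ∀ j k l, ∀ z ∈ Ω, wz l (α j k) z = wz j (α l k) z) (hz : z ∈ Ω) (j k : Fin 2) :
    conj (wz k (rudinF α j) z) = radialMoment 1 (α j k) z +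
      ∑ m, conj (coordC m z) * radialMoment 2 (wzbar m (α j k)) z := by
  have hmoment : radialMoment 1 (α j k) z = conj (radialMoment 1 (α k j) z) :=
    (radialMoment_congr hstar (hherm k j) hz 1).trans (radialMoment_conj 1 _ z)
  have hmoment_wzbar : ∀ m, radialMoment 2 (wzbar m (α j k)) z =
      conj (radialMoment 2 (wz m (α k j)) z) := fun m =>
    (radialMoment_congr hstar
      (fun w hw => wzbar_eq_conj_wz_of_hermitian hopen hherm hw j k m) hz 2).trans
      (radialMoment_conj 2 _ z)
  rw [wz_rudinF_of_closed hopen hstar (hα · j) (hdz · j k) hz]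
  simp only [map_add, map_sum, map_mul, hmoment, hmoment_wzbar]

theorem wz_rudinF_add_conj_wz_rudinF (hopen : IsOpen Ω) (hstar : StarConvex ℝ 0 Ω)
    (hα : ∀ j k, ContDiffOn ℝ 1 (α j k) Ω)
    (hherm : ∀ j k, ∀ z ∈ Ω, α k j z = conj (α j k z))
    (hdz : ∀ j k l, ∀ z ∈ Ω, wz l (α j k) z = wz j (α l k) z) (hz : z ∈ Ω) (j k : Fin 2) :
    wz j (rudinF α k) z + conj (wz k (rudinF α j) z) = α j k z := by
  rw [wz_rudinF_of_closed hopen hstar (hα · k) (hdz · k j) hz,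
    conj_wz_rudinF hopen hstar hα hherm hdz hz,
    ← radialMoment_add_sum_wirtinger hopen hstar (hα j k) hz 1, Finset.sum_add_distrib]
  push_cast
  ring

end RudinPrimitive

theorem stmt11_general (Ω : Set (ℂ × ℂ)) (hopen : IsOpen Ω) (hstar : StarConvex ℝ 0 Ω)
    (α : Fin 2 → Fin 2 → ℂ × ℂ → ℂ) (hα : ∀ j k : Fin 2, ContDiffOn ℝ 1 (α j k) Ω)
    (hherm : ∀ j k : Fin 2, ∀ z ∈ Ω, α k j z = conj (α j k z))
    (hdz : ∀ j k l : Fin 2, ∀ z ∈ Ω, wz l (α j k) z = wz j (α l k) z) :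
    (∀ k l : Fin 2, ∀ z ∈ Ω, wzbar l (rudinF α k) z = wzbar k (rudinF α l) z) ∧
      (∀ j k : Fin 2, ∀ z ∈ Ω,
        wz j (rudinF α k) z + conj (wz k (rudinF α j) z) = α j k z) :=
  ⟨fun k l _ hz => wzbar_rudinF_comm hopen hstar (hα · k) (hα · l)
      (fun j _ hw => wzbar_comm_of_hermitian hopen hherm hdz hw j k l) hz,
    fun j k _ hz => wz_rudinF_add_conj_wz_rudinF hopen hstar hα hherm hdz hz j k⟩

/-- on an open convex `Ω ∋ 0`, for smooth Hermitian `d`-closed data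
`α_{jk}`, the form `f = f₁ dz̄₁ + f₂ dz̄₂` with `f_k(z) = Σ_j z_j ∫₀¹ t α_{jk}(tz) dt`
is `∂̄`-closed and satisfies `∂f − ∂̄f̄ = α`. -/
theorem stmt11 (Ω : Set (ℂ × ℂ)) (hopen : IsOpen Ω) (hconv : Convex ℝ Ω) (h0 : (0 : ℂ × ℂ) ∈ Ω)
    (α : Fin 2 → Fin 2 → ℂ × ℂ → ℂ)
    (hsmooth : ∀ j k : Fin 2, ContDiffOn ℝ (⊤ : ℕ∞) (α j k) Ω)
    (hherm : ∀ j k : Fin 2, ∀ z ∈ Ω, α k j z = starRingEnd ℂ (α j k z))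
    (hdz : ∀ j k l : Fin 2, ∀ z ∈ Ω, wz l (α j k) z = wz j (α l k) z)
    (hdzbar : ∀ j k l : Fin 2, ∀ z ∈ Ω, wzbar l (α j k) z = wzbar k (α j l) z) :
    (∀ k l : Fin 2, ∀ z ∈ Ω, wzbar l (rudinF α k) z = wzbar k (rudinF α l) z) ∧
      (∀ j k : Fin 2, ∀ z ∈ Ω,
        wz j (rudinF α k) z + starRingEnd ℂ (wz k (rudinF α j) z) = α j k z) :=
  stmt11_general Ω hopen (hconv.starConvex h0) α
    (fun j k => (hsmooth j k).of_le (by exact_mod_cast le_top)) hherm hdz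
end

section
/- Let Ω ⊂ ℂ² be a bounded open convex set with 0 ∈ Ω, and let r > 0. Then there exists a constant c > 0, depending only on Ω and r, such that for all continuous functions α_{jk} : closure(Ω) → ℂ (j, k ∈ {1,2}) that vanish identically on the ball B(0, r), the functions f_k(z) = Σ_{j=1}^{2} z_j ∫₀¹ t·α_{jk}(t z) dt satisfy ∫_{bΩ} ( |f₁(z)| + |f₂(z)| ) dH³(z) ≤ c · Σ_{j,k=1}^{2} ∫_Ω |α_{jk}(z)| dV(z), where bΩ is the topological boundary of Ω, H³ is 3-dimensional Hausdorff measure on ℂ² ≅ ℝ⁴, and dV is Lebesgue measure on ℂ² ≅ ℝ⁴. -/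
open Complex Set MeasureTheory

/-!
In polar coordinates `z = tζ` with `ζ ∈ bΩ` and `t = gauge Ω z ∈ (0, 1)`, the value `f_k(ζ)` is
controlled by the integral of `|α_{jk}|` along the ray through `ζ`, and only `t > a` matters for a
suitable `a > 0`, because `α_{jk}` vanishes near the origin. It remains to compare `dt dH³(ζ)` with
`dV` on `t > a`. Dilation by `t` carries `bΩ` to the level set `{gauge Ω = t}` and multiplies `H³`
by `t³ ≥ a³`, and since the gauge is Lipschitz, Eilenberg's inequality bounds the integral over `t`
of the `H³`-measures of the slices of a set by a multiple of its `H⁴`-measure, hence of its volume.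
-/

open Filter Metric Module
open scoped ENNReal NNReal Topology

theorem sum_lintegral_le_lintegral_sum {ι X : Type*} [MeasurableSpace X] (μ : Measure X)
    (s : Finset ι) (f : ι → X → ℝ≥0∞) :
    ∑ i ∈ s, ∫⁻ x, f i x ∂μ ≤ ∫⁻ x, ∑ i ∈ s, f i x ∂μ := by
  classical
  induction s using Finset.induction_on with
  | empty => simp
  | insert i s hi ih =>
    simp only [Finset.sum_insert hi]
    exact (add_le_add_right ih _).trans (le_lintegral_add _ _)

section Eilenberg

variable {X : Type*} [EMetricSpace X]

/-- For a cover `U` and a function `f`, the sum of `(diam U i) ^ d` over those `i` for which `U i`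
meets the fibre of `f` over `t`. It dominates the `d`-dimensional Hausdorff premeasure of the fibre.
The images `f '' U i` are replaced by measurable hulls, which makes it measurable in `t`. -/
noncomputable def fiberSum (d : ℝ) (f : X → ℝ) (U : ℕ → Set X) (t : ℝ) : ℝ≥0∞ :=
  ∑' i, (toMeasurable volume (f '' U i)).indicator (fun _ ↦ ediam (U i) ^ d) t

theorem measurable_fiberSum (d : ℝ) (f : X → ℝ) (U : ℕ → Set X) : Measurable (fiberSum d f U) :=
  Measurable.tsum fun _ ↦ measurable_const.indicator (measurableSet_toMeasurable _ _)

theorem lintegral_fiberSum_le {d : ℝ} (hd : 0 ≤ d) {f : X → ℝ} {K : ℝ≥0} (hf : LipschitzWith K f)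
    (U : ℕ → Set X) : ∫⁻ t, fiberSum d f U t ≤ K * ∑' i, ediam (U i) ^ (d + 1) := by
  have volume_image_le (i : ℕ) : volume (f '' U i) ≤ K * ediam (U i) :=
    (Real.volume_le_diam _).trans (hf.ediam_image_le _)
  calc
    ∫⁻ t, fiberSum d f U t = ∑' i, ediam (U i) ^ d * volume (f '' U i) := by
      simp only [fiberSum]
      rw [lintegral_tsum fun i ↦
        (measurable_const.indicator (measurableSet_toMeasurable _ _)).aemeasurable]
      simp only [lintegral_indicator_const (measurableSet_toMeasurable _ _), measure_toMeasurable]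
    _ ≤ ∑' i, ediam (U i) ^ d * (K * ediam (U i)) := by
      gcongr with i
      exact volume_image_le i
    _ = K * ∑' i, ediam (U i) ^ (d + 1) := by
      simp only [ENNReal.rpow_add_of_nonneg d 1 hd zero_le_one, ENNReal.rpow_one, mul_left_comm,
        ENNReal.tsum_mul_left]

variable [MeasurableSpace X] [BorelSpace X]

theorem exists_cover_tsum_ediam_rpow_le {d : ℝ} (hd : 0 < d) {A : Set X} {b δ : ℝ≥0∞}
    (hb : μH[d] A < b) (hδ : 0 < δ) :
    ∃ U : ℕ → Set X, A ⊆ ⋃ i, U i ∧ (∀ i, ediam (U i) ≤ δ) ∧ ∑' i, ediam (U i) ^ d ≤ b := by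
  rw [Measure.hausdorffMeasure_apply] at hb
  have hδb := (le_iSup₂ (f := fun (r : ℝ≥0∞) (_ : 0 < r) ↦
    ⨅ (U : ℕ → Set X) (_ : A ⊆ ⋃ i, U i) (_ : ∀ i, ediam (U i) ≤ r),
      ∑' i, ⨆ _ : (U i).Nonempty, ediam (U i) ^ d) δ hδ).trans_lt hb
  simp only [iInf_lt_iff] at hδb
  obtain ⟨U, hAU, hUδ, hsum⟩ := hδb
  refine ⟨U, hAU, hUδ, (ENNReal.tsum_le_tsum fun i ↦ ?_).trans hsum.le⟩
  rcases (U i).eq_empty_or_nonempty with h | h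
  · simp [h, hd]
  · exact le_iSup (fun _ : (U i).Nonempty ↦ ediam (U i) ^ d) h

theorem hausdorffMeasure_inter_fiber_le_liminf_fiberSum {d : ℝ} (hd : 0 ≤ d) (f : X → ℝ)
    {A : Set X} {δ : ℕ → ℝ≥0∞} (hδ : Tendsto δ atTop (𝓝 0)) {U : ℕ → ℕ → Set X}
    (hAU : ∀ n, A ⊆ ⋃ i, U n i) (hUδ : ∀ n i, ediam (U n i) ≤ δ n) (t : ℝ) :
    μH[d] (A ∩ f ⁻¹' {t}) ≤ liminf (fun n ↦ fiberSum d f (U n) t) atTop := by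
  let meeting (n : ℕ) : Set ℕ := {i | t ∈ f '' U n i}
  have cover (n : ℕ) : A ∩ f ⁻¹' {t} ⊆ ⋃ i : meeting n, U n i ∩ f ⁻¹' {t} := by
    rintro x ⟨hxA, hxt⟩
    obtain ⟨i, hi⟩ := mem_iUnion.1 (hAU n hxA)
    exact mem_iUnion.2 ⟨⟨i, x, hi, hxt⟩, hi, hxt⟩
  refine (Measure.hausdorffMeasure_le_liminf_tsum d _ δ hδ
    (fun n (i : meeting n) ↦ U n i ∩ f ⁻¹' {t})
    (.of_forall fun n i ↦ (ediam_mono inter_subset_left).trans (hUδ n i))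
    (.of_forall cover)).trans (liminf_le_liminf (.of_forall fun n ↦ ?_))
  calc
    ∑' i : meeting n, ediam (U n i ∩ f ⁻¹' {t}) ^ d
      ≤ ∑' i : meeting n, (toMeasurable volume (f '' U n i)).indicator
          (fun _ ↦ ediam (U n i) ^ d) t := by
        refine ENNReal.tsum_le_tsum fun i ↦ ?_
        rw [indicator_of_mem (subset_toMeasurable volume (f '' U n i) i.2)]
        exact ENNReal.rpow_le_rpow (ediam_mono inter_subset_left) hd
    _ ≤ fiberSum d f (U n) t := ENNReal.tsum_comp_le_tsum_of_injective Subtype.val_injective _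

/-- **Eilenberg's inequality** for real-valued Lipschitz functions. -/
theorem lintegral_hausdorffMeasure_inter_fiber_le {d : ℝ} (hd : 0 ≤ d) {f : X → ℝ} {K : ℝ≥0}
    (hf : LipschitzWith K f) (A : Set X) :
    ∫⁻ t, μH[d] (A ∩ f ⁻¹' {t}) ≤ K * μH[d + 1] A := by
  rcases eq_or_ne K 0 with rfl | hK
  · have null_range : ∀ᵐ t, t ∉ range f := by
      refine measure_eq_zero_iff_ae_notMem.1 (nonpos_iff_eq_zero.1 ?_)
      simpa using (Real.volume_le_diam _).trans (hf.ediam_image_le univ)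
    have empty_fiber : ∀ᵐ t, μH[d] (A ∩ f ⁻¹' {t}) = 0 := by
      filter_upwards [null_range] with t ht
      simp [preimage_singleton_eq_empty.2 ht]
    simp [lintegral_congr_ae empty_fiber]
  have hK' : (K : ℝ≥0∞) ≠ 0 := ENNReal.coe_ne_zero.2 hK
  rw [← ENNReal.div_le_iff' hK' ENNReal.coe_ne_top]
  refine le_of_forall_gt_imp_ge_of_dense fun b hb ↦ ?_
  rw [ENNReal.div_le_iff' hK' ENNReal.coe_ne_top]
  choose U hAU hUδ hUb using fun n : ℕ ↦
    exists_cover_tsum_ediam_rpow_le (by linarith) hb (δ := (n : ℝ≥0∞)⁻¹) (by simp)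
  calc
    ∫⁻ t, μH[d] (A ∩ f ⁻¹' {t}) ≤ ∫⁻ t, liminf (fun n ↦ fiberSum d f (U n) t) atTop :=
      lintegral_mono <| hausdorffMeasure_inter_fiber_le_liminf_fiberSum hd f
        ENNReal.tendsto_inv_nat_nhds_zero hAU hUδ
    _ ≤ liminf (fun n ↦ ∫⁻ t, fiberSum d f (U n) t) atTop :=
      lintegral_liminf_le fun n ↦ measurable_fiberSum d f (U n)
    _ ≤ liminf (fun _ : ℕ ↦ K * b) atTop :=
      liminf_le_liminf <| .of_forall fun n ↦ (lintegral_fiberSum_le hd hf _).trans <| by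
        gcongr
        exact hUb n
    _ = K * b := liminf_const _

end Eilenberg

section Cone

variable {E : Type*} [NormedAddCommGroup E] [NormedSpace ℝ E] {Ω : Set E}

theorem smul_mem_interior_of_mem_frontier (hΩ : Convex ℝ Ω) (h0 : Ω ∈ 𝓝 0) {z : E}
    (hz : z ∈ frontier Ω) {t : ℝ} (ht0 : 0 ≤ t) (ht1 : t < 1) : t • z ∈ interior Ω := by
  simpa using hΩ.combo_interior_closure_mem_interior (mem_interior_iff_mem_nhds.2 h0)
    (frontier_subset_closure hz) (sub_pos.2 ht1) ht0 (sub_add_cancel 1 t)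

theorem preimage_smul_inter_frontier (hΩ : Convex ℝ Ω) (h0 : Ω ∈ 𝓝 0) {t : ℝ} (ht : 0 < t)
    (A : Set E) : (t • ·) ⁻¹' A ∩ frontier Ω = (t • ·) ⁻¹' (A ∩ gauge Ω ⁻¹' {t}) := by
  ext z
  simp [← gauge_eq_one_iff_mem_frontier hΩ h0, gauge_smul_of_nonneg ht.le, ht.ne']

variable [MeasurableSpace E] [BorelSpace E]

theorem hausdorffMeasure_preimage_smul_inter_frontier_le (hΩ : Convex ℝ Ω) (h0 : Ω ∈ 𝓝 0) {d : ℝ}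
    (hd : 0 ≤ d) {a t : ℝ} (ha : 0 < a) (hat : a ≤ t) (A : Set E) :
    μH[d] ((t • ·) ⁻¹' A ∩ frontier Ω) ≤ (‖a⁻¹‖₊ ^ d : ℝ≥0) * μH[d] (A ∩ gauge Ω ⁻¹' {t}) := by
  have ht : 0 < t := ha.trans_le hat
  have inv_le : ‖t⁻¹‖₊ ≤ ‖a⁻¹‖₊ := by
    rw [← NNReal.coe_le_coe, coe_nnnorm, coe_nnnorm, norm_inv, norm_inv,
      Real.norm_of_nonneg ha.le, Real.norm_of_nonneg ht.le]
    gcongr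
  rw [preimage_smul_inter_frontier hΩ h0 ht, preimage_smul₀ ht.ne',
    Measure.hausdorffMeasure_smul₀ hd (inv_ne_zero ht.ne'), ENNReal.smul_def, smul_eq_mul]
  gcongr

/-- The image of `dt ⊗ μH[d]` on `(a, 1) × frontier Ω` under `(t, z) ↦ t • z`: the integral in polar
coordinates, without Jacobian, over the truncated cone spanned by the boundary of `Ω`. -/
noncomputable def coneMeasure (d : ℝ) (Ω : Set E) (a : ℝ) : Measure E :=
  ((volume.restrict (Ioo a 1)).prod (μH[d].restrict (frontier Ω))).map fun p ↦ p.1 • p.2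

variable [FiniteDimensional ℝ E]

theorem exists_hausdorffMeasure_eq_smul (μ : Measure E) [μ.IsAddHaarMeasure] {d : ℝ}
    (hdim : (finrank ℝ E : ℝ) = d) : ∃ C : ℝ≥0, μH[d] = C • μ := by
  have : (μH[d] : Measure E).IsAddHaarMeasure := hdim ▸ isAddHaarMeasure_hausdorffMeasure
  exact ⟨_, Measure.isAddLeftInvariant_eq_smul _ μ⟩

theorem exists_lintegral_hausdorffMeasure_preimage_smul_inter_frontier_le (μ : Measure E)
    [μ.IsAddHaarMeasure] (hΩ : Convex ℝ Ω) (h0 : Ω ∈ 𝓝 0) {d : ℝ} (hd : 0 ≤ d)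
    (hdim : (finrank ℝ E : ℝ) = d + 1) {a : ℝ} (ha : 0 < a) :
    ∃ C : ℝ≥0, ∀ A, ∫⁻ t in Ioo a 1, μH[d] ((t • ·) ⁻¹' A ∩ frontier Ω) ≤ C * μ A := by
  obtain ⟨K, hK⟩ := hΩ.lipschitz_gauge h0
  obtain ⟨C, hC⟩ := exists_hausdorffMeasure_eq_smul μ hdim
  refine ⟨‖a⁻¹‖₊ ^ d * (K * C), fun A ↦ ?_⟩
  calc
    ∫⁻ t in Ioo a 1, μH[d] ((t • ·) ⁻¹' A ∩ frontier Ω)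
      ≤ ∫⁻ t in Ioo a 1, (‖a⁻¹‖₊ ^ d : ℝ≥0) * μH[d] (A ∩ gauge Ω ⁻¹' {t}) :=
        setLIntegral_mono' measurableSet_Ioo fun t ht ↦
          hausdorffMeasure_preimage_smul_inter_frontier_le hΩ h0 hd ha ht.1.le A
    _ ≤ ∫⁻ t, (‖a⁻¹‖₊ ^ d : ℝ≥0) * μH[d] (A ∩ gauge Ω ⁻¹' {t}) := setLIntegral_le_lintegral _ _
    _ = (‖a⁻¹‖₊ ^ d : ℝ≥0) * ∫⁻ t, μH[d] (A ∩ gauge Ω ⁻¹' {t}) :=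
        lintegral_const_mul' _ _ ENNReal.coe_ne_top
    _ ≤ (‖a⁻¹‖₊ ^ d : ℝ≥0) * (K * μH[d + 1] A) := by
        gcongr
        exact lintegral_hausdorffMeasure_inter_fiber_le hd hK A
    _ = (‖a⁻¹‖₊ ^ d * (K * C) : ℝ≥0) * μ A := by
        rw [hC, Measure.smul_apply, ENNReal.smul_def, smul_eq_mul]
        push_cast
        ring

theorem hausdorffMeasure_frontier_lt_top (hΩ : Convex ℝ Ω) (h0 : Ω ∈ 𝓝 0)
    (hbdd : Bornology.IsBounded Ω) {d : ℝ} (hd : 0 ≤ d) (hdim : (finrank ℝ E : ℝ) = d + 1) :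
    μH[d] (frontier Ω) < ∞ := by
  let μ : Measure E := Measure.addHaar
  obtain ⟨C, hC⟩ := exists_lintegral_hausdorffMeasure_preimage_smul_inter_frontier_le μ hΩ h0 hd
    hdim (a := 1 / 2) one_half_pos
  have hlt : μH[d] (frontier Ω) * volume (Ioo (1 / 2 : ℝ) 1) < ∞ := calc
    μH[d] (frontier Ω) * volume (Ioo (1 / 2 : ℝ) 1)
      = ∫⁻ _ in Ioo (1 / 2 : ℝ) 1, μH[d] (frontier Ω) := (setLIntegral_const _ _).symm
    _ ≤ ∫⁻ t in Ioo (1 / 2 : ℝ) 1, μH[d] ((t • ·) ⁻¹' Ω ∩ frontier Ω) :=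
      setLIntegral_mono' measurableSet_Ioo fun t ht ↦ measure_mono fun z hz ↦
        ⟨interior_subset (s := Ω) <| smul_mem_interior_of_mem_frontier hΩ h0 hz
          (one_half_pos.trans ht.1).le ht.2, hz⟩
    _ ≤ C * μ Ω := hC Ω
    _ < ∞ := ENNReal.mul_lt_top ENNReal.coe_lt_top hbdd.measure_lt_top
  exact ENNReal.lt_top_of_mul_ne_top_left hlt.ne (by norm_num)

theorem coneMeasure_apply {d : ℝ} [SFinite ((μH[d] : Measure E).restrict (frontier Ω))] (a : ℝ)
    {A : Set E} (hA : MeasurableSet A) :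
    coneMeasure d Ω a A = ∫⁻ t in Ioo a 1, μH[d] ((t • ·) ⁻¹' A ∩ frontier Ω) := by
  have hm : Measurable fun p : ℝ × E ↦ p.1 • p.2 := by fun_prop
  rw [coneMeasure, Measure.map_apply hm hA, Measure.prod_apply (hm hA)]
  simp only [Measure.restrict_apply' isClosed_frontier.measurableSet, preimage_preimage]

theorem lintegral_coneMeasure {d : ℝ} [SFinite ((μH[d] : Measure E).restrict (frontier Ω))] {a : ℝ}
    {g : E → ℝ≥0∞} (hg : AEMeasurable g (coneMeasure d Ω a)) :
    ∫⁻ z, g z ∂coneMeasure d Ω a = ∫⁻ z in frontier Ω, (∫⁻ t in Ioo a 1, g (t • z)) ∂μH[d] := by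
  have hm : Measurable fun p : ℝ × E ↦ p.1 • p.2 := by fun_prop
  rw [coneMeasure, lintegral_map' hg hm.aemeasurable]
  exact lintegral_prod_symm _ (hg.comp_measurable hm)

theorem exists_coneMeasure_le_smul_restrict (μ : Measure E) [μ.IsAddHaarMeasure] (hΩ : Convex ℝ Ω)
    (h0 : Ω ∈ 𝓝 0) {d : ℝ} [SFinite ((μH[d] : Measure E).restrict (frontier Ω))] (hd : 0 ≤ d)
    (hdim : (finrank ℝ E : ℝ) = d + 1) {a : ℝ} (ha : 0 < a) :
    ∃ C : ℝ≥0, coneMeasure d Ω a ≤ C • μ.restrict Ω := by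
  obtain ⟨C, hC⟩ :=
    exists_lintegral_hausdorffMeasure_preimage_smul_inter_frontier_le μ hΩ h0 hd hdim ha
  refine ⟨C, Measure.le_iff.2 fun A hA ↦ ?_⟩
  calc
    coneMeasure d Ω a A = ∫⁻ t in Ioo a 1, μH[d] ((t • ·) ⁻¹' A ∩ frontier Ω) :=
      coneMeasure_apply a hA
    _ ≤ ∫⁻ t in Ioo a 1, μH[d] ((t • ·) ⁻¹' (A ∩ Ω) ∩ frontier Ω) :=
      setLIntegral_mono' measurableSet_Ioo fun t ht ↦ measure_mono fun z ⟨hzA, hz⟩ ↦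
        ⟨⟨hzA, interior_subset <|
          smul_mem_interior_of_mem_frontier hΩ h0 hz (ha.trans ht.1).le ht.2⟩, hz⟩
    _ ≤ C * μ (A ∩ Ω) := hC _
    _ = (C • μ.restrict Ω) A := by
      rw [Measure.smul_apply, Measure.restrict_apply hA, ENNReal.smul_def, smul_eq_mul]

theorem exists_lintegral_frontier_lintegral_smul_le (μ : Measure E) [μ.IsAddHaarMeasure]
    (hΩ : Convex ℝ Ω) (h0 : Ω ∈ 𝓝 0) (hbdd : Bornology.IsBounded Ω) {d : ℝ} (hd : 0 ≤ d)
    (hdim : (finrank ℝ E : ℝ) = d + 1) {a : ℝ} (ha : 0 < a) :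
    ∃ C : ℝ≥0, ∀ g : E → ℝ≥0∞, AEMeasurable g (μ.restrict Ω) →
      ∫⁻ z in frontier Ω, (∫⁻ t in Ioo a 1, g (t • z)) ∂μH[d] ≤ C * ∫⁻ z in Ω, g z ∂μ := by
  have : IsFiniteMeasure ((μH[d] : Measure E).restrict (frontier Ω)) :=
    isFiniteMeasure_restrict.2 (hausdorffMeasure_frontier_lt_top hΩ h0 hbdd hd hdim).ne
  obtain ⟨C, hC⟩ := exists_coneMeasure_le_smul_restrict μ hΩ h0 hd hdim ha
  refine ⟨C, fun g hg ↦ ?_⟩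
  calc
    ∫⁻ z in frontier Ω, (∫⁻ t in Ioo a 1, g (t • z)) ∂μH[d] = ∫⁻ z, g z ∂coneMeasure d Ω a :=
      (lintegral_coneMeasure <| hg.mono_ac <| Measure.absolutelyContinuous_of_le_smul hC).symm
    _ ≤ ∫⁻ z, g z ∂(C • μ.restrict Ω) := lintegral_mono' hC le_rfl
    _ = C * ∫⁻ z in Ω, g z ∂μ := by
      rw [lintegral_smul_measure, ENNReal.smul_def, smul_eq_mul]

end Cone

section RadialPrimitive

theorem enorm_integral_smul_comp_smul_le {E F : Type*} [NormedAddCommGroup E] [NormedSpace ℝ E]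
    [NormedAddCommGroup F] [NormedSpace ℝ F] {β : E → F} {r : ℝ} (hβ : ∀ w ∈ ball 0 r, β w = 0)
    {a : ℝ} (ha : 0 ≤ a) {z : E} (hz : a * ‖z‖ < r) :
    ‖∫ t in (0 : ℝ)..1, t • β (t • z)‖ₑ ≤ ∫⁻ t in Ioo a 1, ‖β (t • z)‖ₑ := by
  have vanish : ∀ t ∈ Ioo (0 : ℝ) 1 \ Ioo a 1, t • β (t • z) = 0 := by
    rintro t ⟨⟨ht0, ht1⟩, hta⟩
    have hta : t ≤ a := not_lt.1 fun h ↦ hta ⟨h, ht1⟩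
    have mem_ball : t • z ∈ ball (0 : E) r := by
      rw [mem_ball_zero_iff, norm_smul, Real.norm_of_nonneg ht0.le]
      exact lt_of_le_of_lt (by gcongr) hz
    rw [hβ _ mem_ball, smul_zero]
  have integral_eq : ∫ t in (0 : ℝ)..1, t • β (t • z) = ∫ t in Ioo a 1, t • β (t • z) := by
    rw [intervalIntegral.integral_of_le zero_le_one, integral_Ioc_eq_integral_Ioo]
    exact setIntegral_eq_of_subset_of_forall_sdiff_eq_zero measurableSet_Ioo
      (Ioo_subset_Ioo_left ha) vanish
  rw [integral_eq]
  refine (enorm_integral_le_lintegral_enorm _).trans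
    (setLIntegral_mono' measurableSet_Ioo fun t ht ↦ ?_)
  have enorm_le_one : ‖t‖ₑ ≤ 1 := by
    rw [Real.enorm_eq_ofReal (ha.trans ht.1.le)]
    exact ENNReal.ofReal_le_one.2 ht.2.le
  rw [enorm_smul]
  exact mul_le_of_le_one_left' enorm_le_one

theorem enorm_coordC_le (j : Fin 2) (z : ℂ × ℂ) : ‖coordC j z‖ₑ ≤ ‖z‖ₑ := by
  rw [enorm_le_iff_norm_le, coordC]
  split_ifs
  exacts [norm_fst_le z, norm_snd_le z]

theorem sum_enorm_rudinF_le {α : Fin 2 → Fin 2 → ℂ × ℂ → ℂ} {r : ℝ}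
    (hα : ∀ j k, ∀ z ∈ ball (0 : ℂ × ℂ) r, α j k z = 0) {a : ℝ} (ha : 0 ≤ a) {z : ℂ × ℂ}
    (hz : a * ‖z‖ < r) :
    ∑ k, ‖rudinF α k z‖ₑ ≤ ‖z‖ₑ * ∫⁻ t in Ioo a 1, ∑ k, ∑ j, ‖α j k (t • z)‖ₑ := by
  have term_le (j k : Fin 2) : ‖coordC j z * ∫ t in (0 : ℝ)..1, (t : ℂ) * α j k (t • z)‖ₑ ≤
      ‖z‖ₑ * ∫⁻ t in Ioo a 1, ‖α j k (t • z)‖ₑ := by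
    simp only [enorm_mul, ← real_smul]
    exact mul_le_mul' (enorm_coordC_le j z) (enorm_integral_smul_comp_smul_le (hα j k) ha hz)
  calc
    ∑ k, ‖rudinF α k z‖ₑ ≤ ∑ k, ∑ j, ‖z‖ₑ * ∫⁻ t in Ioo a 1, ‖α j k (t • z)‖ₑ :=
      Finset.sum_le_sum fun k _ ↦
        (enorm_sum_le _ _).trans (Finset.sum_le_sum fun j _ ↦ term_le j k)
    _ = ‖z‖ₑ * ∑ k, ∑ j, ∫⁻ t in Ioo a 1, ‖α j k (t • z)‖ₑ := by simp only [Finset.mul_sum]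
    _ ≤ ‖z‖ₑ * ∫⁻ t in Ioo a 1, ∑ k, ∑ j, ‖α j k (t • z)‖ₑ := by
      gcongr
      exact (Finset.sum_le_sum fun k _ ↦ sum_lintegral_le_lintegral_sum _ _ _).trans
        (sum_lintegral_le_lintegral_sum _ _ _)

theorem exists_lintegral_frontier_sum_enorm_rudinF_le {Ω : Set (ℂ × ℂ)} (hΩ : Convex ℝ Ω)
    (h0 : Ω ∈ 𝓝 0) (hbdd : Bornology.IsBounded Ω) {r : ℝ} (hr : 0 < r) :
    ∃ c : ℝ≥0, ∀ α : Fin 2 → Fin 2 → ℂ × ℂ → ℂ,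
      (∀ j k, AEStronglyMeasurable (α j k) (volume.restrict Ω)) →
      (∀ j k, ∀ z ∈ ball (0 : ℂ × ℂ) r, α j k z = 0) →
      ∫⁻ z in frontier Ω, ∑ k, ‖rudinF α k z‖ₑ ∂μH[3] ≤
        c * ∑ j, ∑ k, ∫⁻ z in Ω, ‖α j k z‖ₑ := by
  obtain ⟨R, hR⟩ := hbdd.closure.exists_norm_le
  obtain ⟨a, ha, hRa⟩ : ∃ a > 0, R * a < r := exists_pos_mul_lt hr R
  have : (volume : Measure (ℂ × ℂ)).IsAddHaarMeasure := Measure.prod.instIsAddHaarMeasure _ _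
  obtain ⟨C, hC⟩ := exists_lintegral_frontier_lintegral_smul_le volume hΩ h0 hbdd (d := 3)
    (by norm_num) (by norm_num) ha
  refine ⟨R.toNNReal * C, fun α hαm hα ↦ ?_⟩
  have pointwise : ∀ z ∈ frontier Ω, ∑ k, ‖rudinF α k z‖ₑ ≤
      R.toNNReal * ∫⁻ t in Ioo a 1, ∑ k, ∑ j, ‖α j k (t • z)‖ₑ := fun z hz ↦ by
    have hzR : ‖z‖ ≤ R := hR z (frontier_subset_closure hz)
    have haz : a * ‖z‖ < r := calc
      a * ‖z‖ ≤ a * R := by gcongr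
      _ < r := mul_comm R a ▸ hRa
    have enorm_le : ‖z‖ₑ ≤ R.toNNReal := by
      rw [← ofReal_norm]
      exact ENNReal.ofReal_le_ofReal hzR
    exact (sum_enorm_rudinF_le hα ha.le haz).trans (by gcongr)
  calc
    ∫⁻ z in frontier Ω, ∑ k, ‖rudinF α k z‖ₑ ∂μH[3]
      ≤ ∫⁻ z in frontier Ω,
          R.toNNReal * (∫⁻ t in Ioo a 1, ∑ k, ∑ j, ‖α j k (t • z)‖ₑ) ∂μH[3] :=
        setLIntegral_mono' isClosed_frontier.measurableSet pointwise
    _ = R.toNNReal *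
          ∫⁻ z in frontier Ω, (∫⁻ t in Ioo a 1, ∑ k, ∑ j, ‖α j k (t • z)‖ₑ) ∂μH[3] :=
        lintegral_const_mul' _ _ ENNReal.coe_ne_top
    _ ≤ R.toNNReal * (C * ∫⁻ z in Ω, ∑ k, ∑ j, ‖α j k z‖ₑ) := by
        gcongr
        exact hC (fun z ↦ ∑ k, ∑ j, ‖α j k z‖ₑ) (by fun_prop)
    _ = (R.toNNReal * C : ℝ≥0) * ∑ j, ∑ k, ∫⁻ z in Ω, ‖α j k z‖ₑ := by
        rw [lintegral_finsetSum' _ (by fun_prop), Finset.sum_comm, ENNReal.coe_mul, mul_assoc]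
        congr! 4 with k
        exact lintegral_finsetSum' _ (by fun_prop)

end RadialPrimitive

theorem stmt13_general (Ω : Set (ℂ × ℂ)) (hconv : Convex ℝ Ω) (hbdd : Bornology.IsBounded Ω)
    (h0 : Ω ∈ 𝓝 0) (r : ℝ) (hr : 0 < r) :
    ∃ c > (0 : ℝ), ∀ α : Fin 2 → Fin 2 → ℂ × ℂ → ℂ,
      (∀ j k : Fin 2, AEStronglyMeasurable (α j k) (volume.restrict Ω)) →
      (∀ j k : Fin 2, ∀ z ∈ ball (0 : ℂ × ℂ) r, α j k z = 0) →
      ∫⁻ z in frontier Ω, ENNReal.ofReal (‖rudinF α 0 z‖ + ‖rudinF α 1 z‖) ∂μH[3] ≤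
        ENNReal.ofReal c *
          ∑ j : Fin 2, ∑ k : Fin 2, ∫⁻ z in Ω, ENNReal.ofReal (‖α j k z‖) := by
  obtain ⟨c, hc⟩ := exists_lintegral_frontier_sum_enorm_rudinF_le hconv h0 hbdd hr
  refine ⟨c + 1, by positivity, fun α hαm hα ↦ ?_⟩
  have hc_le : (c : ℝ≥0∞) ≤ ENNReal.ofReal (c + 1) := by
    rw [← ENNReal.ofReal_coe_nnreal]
    exact ENNReal.ofReal_le_ofReal (le_add_of_nonneg_right zero_le_one)
  have bound := (hc α hαm hα).trans (mul_le_mul_left hc_le _)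
  simpa only [Fin.sum_univ_two, ENNReal.ofReal_add (norm_nonneg _) (norm_nonneg _), ofReal_norm]
    using bound

/-- on a bounded open convex `Ω ∋ 0` and for `r > 0` there is `c > 0`
such that for all continuous data `α_{jk}` on `closure Ω` vanishing on `B(0,r)`,
`∫_{bΩ} (|f₁| + |f₂|) dH³ ≤ c Σ_{j,k} ∫_Ω |α_{jk}| dV`. -/
theorem stmt13 (Ω : Set (ℂ × ℂ)) (hopen : IsOpen Ω) (hconv : Convex ℝ Ω)
    (hbdd : Bornology.IsBounded Ω) (h0 : (0 : ℂ × ℂ) ∈ Ω) (r : ℝ) (hr : 0 < r) :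
    ∃ c > (0 : ℝ), ∀ α : Fin 2 → Fin 2 → ℂ × ℂ → ℂ,
      (∀ j k : Fin 2, ContinuousOn (α j k) (closure Ω)) →
      (∀ j k : Fin 2, ∀ z ∈ Metric.ball (0 : ℂ × ℂ) r, α j k z = 0) →
      ∫⁻ z in frontier Ω,
          ENNReal.ofReal (‖rudinF α 0 z‖ + ‖rudinF α 1 z‖) ∂μH[3] ≤
        ENNReal.ofReal c *
          ∑ j : Fin 2, ∑ k : Fin 2, ∫⁻ z in Ω, ENNReal.ofReal (‖α j k z‖) :=
  (stmt13_general Ω hconv hbdd (hopen.mem_nhds h0) r hr).imp fun _ ⟨hc, h⟩ ↦ ⟨hc, fun α hα ↦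
    h α fun j k ↦ ((hα j k).mono subset_closure).aestronglyMeasurable hopen.measurableSet⟩
end
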